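/- For every integer n ≥ 3, the quadruply-refined ASM generating function satisfies the quadratic relation: y(z4−z2)(z1−z3)·Zqua_n(x,y;z1,z2,z3,z4)·Z_{n−2}(x,y) = ((z1−1)(z2−1)−y·z1·z2)((z3−1)(z4−1)−y·z3·z4)·Zadj_{n−1}(x,y;z4,z1)·Zadj_{n−1}(x,y;z2,z3) − (x(z4−1)(z1−1)−y)(x(z2−1)(z3−1)−y)·z1·z2·z3·z4·Zbaradj_{n−1}(x,y;z1,z2)·Zbaradj_{n−1}(x,y;z3,z4) − (z2−1)(z3−1)((z4−1)(z1−1)−y·z4·z1)·Zadj_{n−1}(x,y;z4,z1)·Z_{n−2}(x,y) + (z3−1)(z4−1)(x(z1−1)(z2−1)−y)·z1·z2·(x·z3·z4)^{n−1}·Zbaradj_{n−1}(x,y;z1,z2)·Z_{n−2}(x,y) − (z4−1)(z1−1)((z2−1)(z3−1)−y·z2·z3)·Zadj_{n−1}(x,y;z2,z3)·Z_{n−2}(x,y) + (z1−1)(z2−1)(x(z3−1)(z4−1)−y)·z3·z4·(x·z1·z2)^{n−1}·Zbaradj_{n−1}(x,y;z3,z4)·Z_{n−2}(x,y) + (z1−1)(z2−1)(z3−1)(z4−1)(1−(x²·z1·z2·z3·z4)^{n−1})·Z_{n−2}(x,y)²,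 as an identity of polynomials in ℤ[x,y,z1,z2,z3,z4] (equivalently, for all values of the variables in any commutative ring). -/

import Mathlib

open Finset

/-- The `n × n` integer matrix encoded by `e`, with entries in `{-1, 0, 1}`. -/
def asmMat {n : ℕ} (e : Fin n → Fin n → Fin 3) : Fin n → Fin n → ℤ :=
  fun i j => (e i j : ℤ) - 1

/-- `A` is an alternating sign matrix: all entries lie in `{-1, 0, 1}`, every
partial row sum and every partial column sum is `0` or `1` (equivalently, the
nonzero entries of each row and of each column alternate in sign), and every
complete row sum and column sum is `1`. -/
def IsASM {n : ℕ} (A : Fin n → Fin n → ℤ) : Prop :=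
  (∀ i j, A i j = -1 ∨ A i j = 0 ∨ A i j = 1) ∧
  (∀ (i j : Fin n), (∑ j' ∈ univ.filter (fun j' : Fin n => j' ≤ j), A i j') = 0 ∨
    (∑ j' ∈ univ.filter (fun j' : Fin n => j' ≤ j), A i j') = 1) ∧
  (∀ (i j : Fin n), (∑ i' ∈ univ.filter (fun i' : Fin n => i' ≤ i), A i' j) = 0 ∨
    (∑ i' ∈ univ.filter (fun i' : Fin n => i' ≤ i), A i' j) = 1) ∧
  (∀ i : Fin n, (∑ j, A i j) = 1) ∧
  (∀ j : Fin n, (∑ i, A i j) = 1)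

/-- `ν(A)`, the number of generalized inversions of `A`. -/
def nuASM {n : ℕ} (A : Fin n → Fin n → ℤ) : ℕ :=
  (∑ i : Fin n, ∑ i' : Fin n, ∑ j : Fin n, ∑ j' : Fin n,
      if i < i' ∧ j' ≤ j then A i j * A i' j' else 0).toNat

/-- `μ(A)`, the number of entries of `A` equal to `-1`. -/
def muASM {n : ℕ} (A : Fin n → Fin n → ℤ) : ℕ :=
  (univ.filter (fun p : Fin n × Fin n => A p.1 p.2 = -1)).card

/-- `ρT(A)`, the number of `0`'s to the left of the `1` in the top row of `A`. -/
def rhoT {n : ℕ} (A : Fin n → Fin n → ℤ) : ℕ :=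
  (univ.filter (fun j : Fin n =>
    A ⟨0, j.pos⟩ j = 0 ∧ ∃ j' : Fin n, j < j' ∧ A ⟨0, j.pos⟩ j' = 1)).card

/-- `ρR(A)`, the number of `0`'s below the `1` in the right-most column of `A`. -/
def rhoR {n : ℕ} (A : Fin n → Fin n → ℤ) : ℕ :=
  (univ.filter (fun i : Fin n =>
    A i ⟨n - 1, Nat.sub_lt i.pos Nat.one_pos⟩ = 0 ∧
      ∃ i' : Fin n, i' < i ∧ A i' ⟨n - 1, Nat.sub_lt i.pos Nat.one_pos⟩ = 1)).card

/-- `ρB(A)`, the number of `0`'s to the right of the `1` in the bottom row of `A`. -/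
def rhoB {n : ℕ} (A : Fin n → Fin n → ℤ) : ℕ :=
  (univ.filter (fun j : Fin n =>
    A ⟨n - 1, Nat.sub_lt j.pos Nat.one_pos⟩ j = 0 ∧
      ∃ j' : Fin n, j' < j ∧ A ⟨n - 1, Nat.sub_lt j.pos Nat.one_pos⟩ j' = 1)).card

/-- `ρL(A)`, the number of `0`'s above the `1` in the left-most column of `A`. -/
def rhoL {n : ℕ} (A : Fin n → Fin n → ℤ) : ℕ :=
  (univ.filter (fun i : Fin n =>
    A i ⟨0, i.pos⟩ = 0 ∧ ∃ i' : Fin n, i < i' ∧ A i' ⟨0, i.pos⟩ = 1)).card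

open Classical in
/-- The quadruply-refined ASM generating function
`Zqua_n(x,y;z1,z2,z3,z4) = Σ_A x^{ν(A)} y^{μ(A)} z1^{ρT(A)} z2^{ρR(A)} z3^{ρB(A)} z4^{ρL(A)}`. -/
noncomputable def Zqua (n : ℕ) {R : Type*} [CommRing R] (x y z1 z2 z3 z4 : R) : R :=
  ∑ e : Fin n → Fin n → Fin 3,
    if IsASM (asmMat e) then
      x ^ nuASM (asmMat e) * y ^ muASM (asmMat e) * z1 ^ rhoT (asmMat e) *
        z2 ^ rhoR (asmMat e) * z3 ^ rhoB (asmMat e) * z4 ^ rhoL (asmMat e)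
    else 0

/-- Adjacent-boundary doubly-refined generating function `Zadj_n(x,y;z1,z2)`. -/
noncomputable def Zadj (n : ℕ) {R : Type*} [CommRing R] (x y z1 z2 : R) : R :=
  Zqua n x y z1 1 1 z2

/-- Alternative adjacent-boundary doubly-refined generating function `Zbaradj_n(x,y;z1,z2)`. -/
noncomputable def Zbaradj (n : ℕ) {R : Type*} [CommRing R] (x y z1 z2 : R) : R :=
  Zqua n x y z1 z2 1 1

/-- Triply-refined generating function `Ztri_n(x,y;z1,z2,z3)`. -/
noncomputable def Ztri (n : ℕ) {R : Type*} [CommRing R] (x y z1 z2 z3 : R) : R :=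
  Zqua n x y z1 1 z2 z3

/-- Opposite-boundary doubly-refined generating function `Zopp_n(x,y;z1,z2)`. -/
noncomputable def Zopp (n : ℕ) {R : Type*} [CommRing R] (x y z1 z2 : R) : R :=
  Zqua n x y z1 1 z2 1

/-- Singly-refined generating function `Z_n(x,y;z)`. -/
noncomputable def Zsing (n : ℕ) {R : Type*} [CommRing R] (x y z : R) : R :=
  Zqua n x y z 1 1 1

/-- Unrefined generating function `Z_n(x,y)`.  Note `Zun 0 x y = 1`. -/
noncomputable def Zun (n : ℕ) {R : Type*} [CommRing R] (x y : R) : R :=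
  Zqua n x y 1 1 1 1

/-- The six local Boltzmann weights at a site: a zero entry with partial row sum `h` to its left
and partial column sum `k` above it has weight `whk`; the entries `1` and `-1` have weights
`cp` and `cm`. -/
structure VertexWeights (R : Type*) where
  w00 : R
  w11 : R
  w01 : R
  w10 : R
  cp : R
  cm : R

/-- The weight of the entry `a` with partial row sum `h` to its left and partial column sum `k`
above it; it vanishes on the configurations that cannot occur in an alternating sign matrix. -/
def VertexWeights.ev {R : Type*} [Zero R] (c : VertexWeights R) (h k a : ℤ) : R :=
  if a = 0 then
    if h = 0 then if k = 0 then c.w00 else if k = 1 then c.w01 else 0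
    else if h = 1 then if k = 0 then c.w10 else if k = 1 then c.w11 else 0
    else 0
  else if a = 1 then if h = 0 ∧ k = 0 then c.cp else 0
  else if a = -1 then if h = 1 ∧ k = 1 then c.cm else 0
  else 0

/-- The image of the local weights under a map. -/
def VertexWeights.map {R S : Type*} (f : R → S) (c : VertexWeights R) : VertexWeights S :=
  ⟨f c.w00, f c.w11, f c.w01, f c.w10, f c.cp, f c.cm⟩

section Transfer

variable {R : Type*} [CommRing R]

/-- The row transfer operator: it sends a function `ψ` of the column sums below a row to a
function of the column sums above it, starting from the partial row sum `h` and ending with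
the row sum `1`. -/
def rowTransfer : List (VertexWeights R) → ℤ → List ℤ → (List ℤ → R) → R
  | [], h, [], ψ => if h = 1 then ψ [] else 0
  | c :: F, h, k :: ks, ψ =>
      c.ev h k (-1) * rowTransfer F (h + -1) ks (fun t => ψ ((k + -1) :: t)) +
      c.ev h k 0 * rowTransfer F (h + 0) ks (fun t => ψ ((k + 0) :: t)) +
      c.ev h k 1 * rowTransfer F (h + 1) ks (fun t => ψ ((k + 1) :: t))
  | [], _, _ :: _, _ => 0
  | _ :: _, _, [], _ => 0

/-- The partition function of a stack of rows, as a function of the column sums above it. -/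
def stackZ : List (List (VertexWeights R)) → List ℤ → R
  | [], k => if ∀ t ∈ k, t = 1 then 1 else 0
  | F :: L, k => rowTransfer F 0 k (stackZ L)

theorem rowTransfer_zero_zero (c : VertexWeights R) (F ks) (ψ : List ℤ → R) :
    rowTransfer (c :: F) 0 (0 :: ks) ψ =
      c.w00 * rowTransfer F 0 ks (fun t => ψ (0 :: t)) +
      c.cp * rowTransfer F 1 ks (fun t => ψ (1 :: t)) := by
  simp [rowTransfer, VertexWeights.ev]

theorem rowTransfer_one_one (c : VertexWeights R) (F ks) (ψ : List ℤ → R) :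
    rowTransfer (c :: F) 1 (1 :: ks) ψ =
      c.w11 * rowTransfer F 1 ks (fun t => ψ (1 :: t)) +
      c.cm * rowTransfer F 0 ks (fun t => ψ (0 :: t)) := by
  simp [rowTransfer, VertexWeights.ev]
  ring

theorem rowTransfer_zero_one (c : VertexWeights R) (F ks) (ψ : List ℤ → R) :
    rowTransfer (c :: F) 0 (1 :: ks) ψ = c.w01 * rowTransfer F 0 ks (fun t => ψ (1 :: t)) := by
  simp [rowTransfer, VertexWeights.ev]

theorem rowTransfer_one_zero (c : VertexWeights R) (F ks) (ψ : List ℤ → R) :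
    rowTransfer (c :: F) 1 (0 :: ks) ψ = c.w10 * rowTransfer F 1 ks (fun t => ψ (0 :: t)) := by
  simp [rowTransfer, VertexWeights.ev]

theorem rowTransfer_of_ne (c : VertexWeights R) (F) {h k : ℤ} (ks) (ψ : List ℤ → R)
    (h0 : k ≠ 0) (h1 : k ≠ 1) : rowTransfer (c :: F) h (k :: ks) ψ = 0 := by
  simp [rowTransfer, VertexWeights.ev, h0, h1]

theorem rowTransfer_add (F : List (VertexWeights R)) (h : ℤ) (ks) (ψ φ : List ℤ → R) :
    rowTransfer F h ks (fun t => ψ t + φ t) = rowTransfer F h ks ψ + rowTransfer F h ks φ := by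
  induction F generalizing h ks ψ φ with
  | nil => cases ks <;> simp [rowTransfer]; split_ifs <;> simp
  | cons c F ih =>
    cases ks with
    | nil => simp [rowTransfer]
    | cons k ks => simp only [rowTransfer, ih]; ring

theorem rowTransfer_mul (F : List (VertexWeights R)) (h : ℤ) (ks) (r : R) (ψ : List ℤ → R) :
    rowTransfer F h ks (fun t => r * ψ t) = r * rowTransfer F h ks ψ := by
  induction F generalizing h ks ψ with
  | nil => cases ks <;> simp [rowTransfer]
  | cons c F ih =>
    cases ks with
    | nil => simp [rowTransfer]
    | cons k ks => simp only [rowTransfer, ih]; ring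

theorem map_rowTransfer {S : Type*} [CommRing S] (f : R →+* S) (F : List (VertexWeights R))
    (h : ℤ) (ks) (ψ : List ℤ → R) :
    f (rowTransfer F h ks ψ) =
      rowTransfer (F.map (VertexWeights.map f)) h ks (fun t => f (ψ t)) := by
  have hev : ∀ (c : VertexWeights R) (h k a : ℤ), f (c.ev h k a) = (c.map f).ev h k a := by
    intro c h k a
    simp only [VertexWeights.ev, VertexWeights.map]
    split_ifs <;> simp
  induction F generalizing h ks ψ with
  | nil => cases ks <;> simp [rowTransfer, apply_ite f]
  | cons c F ih =>
    cases ks with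
    | nil => simp [rowTransfer]
    | cons k ks => simp only [rowTransfer, ih, List.map_cons, map_add, map_mul, hev]

theorem map_stackZ {S : Type*} [CommRing S] (f : R →+* S) (L : List (List (VertexWeights R)))
    (k : List ℤ) :
    f (stackZ L k) = stackZ (L.map (List.map (VertexWeights.map f))) k := by
  induction L generalizing k with
  | nil => simp [stackZ, apply_ite f]
  | cons F L ih => simp only [stackZ, map_rowTransfer, ih, List.map_cons]

/-- The integrable weights, with row parameter `u` and column parameter `v`. -/
def sixVertex (x y u v : R) : VertexWeights R where
  w00 := y * u * v - (u - 1) * (v - 1)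
  w11 := x * (y * u * v - (u - 1) * (v - 1))
  w01 := y - x * (u - 1) * (v - 1)
  w10 := y - x * (u - 1) * (v - 1)
  cp := y
  cm := (x * u ^ 2 - (x + 1 - y) * u + 1) * (x * v ^ 2 - (x + 1 - y) * v + 1)

/-- The row-exchange relations. -/
theorem yangBaxter (x y u u' : R) (vs : List R) (ks : List ℤ) (ψ : List ℤ → R) :
    let Q := fun (a b : R) (h l : ℤ) => rowTransfer (vs.map (sixVertex x y a)) h ks
      (fun t => rowTransfer (vs.map (sixVertex x y b)) l t ψ)
    let η := 1 + x * u * u' - (x + 1 - y) * u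
    let γ := fun z : R => x * z ^ 2 - (x + 1 - y) * z + 1
    η * Q u u' 0 0 = η * Q u' u 0 0 ∧ η * Q u u' 1 1 = η * Q u' u 1 1 ∧
    η * Q u u' 0 1 = γ u' * Q u' u 0 1 + x * (u' - u) * Q u' u 1 0 ∧
    η * Q u u' 1 0 = (u' - u) * Q u' u 0 1 + γ u * Q u' u 1 0 := by
  intro Q η γ
  induction vs generalizing ks ψ with
  | nil => cases ks <;> simp [Q, rowTransfer]
  | cons v vs ih =>
    cases ks with
    | nil => simp [Q, rowTransfer]
    | cons k ks =>
      let α := fun z : R => y * z * v - (z - 1) * (v - 1)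
      let β := fun z : R => y - x * (z - 1) * (v - 1)
      let cm := fun z : R => γ z * γ v
      by_cases h0 : k = 0
      · subst h0
        obtain ⟨a1, a2, a3, a4⟩ := ih ks (fun t => ψ (0 :: t))
        obtain ⟨b1, b2, b3, b4⟩ := ih ks (fun t => ψ (1 :: t))
        simp only [Q, List.map_cons, rowTransfer_zero_zero, rowTransfer_one_one,
          rowTransfer_zero_one, rowTransfer_one_zero, rowTransfer_add, rowTransfer_mul] at *
        simp only [sixVertex, η, γ] at *
        refine ⟨?_, ?_, ?_, ?_⟩
        · linear_combination (norm := (simp only [α, β, cm, γ]; ring)) α u * α u' * a1 + α u * y * b3 + y * β u' * b4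
        · linear_combination (norm := (simp only [α, β, cm, γ]; ring)) β u * β u' * a2
        · linear_combination (norm := (simp only [α, β, cm, γ]; ring)) α u * β u' * a3 + y * x * α u' * b2 + y * cm u' * a4
        · linear_combination (norm := (simp only [α, β, cm, γ]; ring)) β u * α u' * a4 + β u * y * b2
      · by_cases h1 : k = 1
        · subst h1
          obtain ⟨a1, a2, a3, a4⟩ := ih ks (fun t => ψ (0 :: t))
          obtain ⟨b1, b2, b3, b4⟩ := ih ks (fun t => ψ (1 :: t))
          simp only [Q, List.map_cons, rowTransfer_zero_zero, rowTransfer_one_one,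
            rowTransfer_zero_one, rowTransfer_one_zero, rowTransfer_add, rowTransfer_mul] at *
          simp only [sixVertex, η, γ] at *
          refine ⟨?_, ?_, ?_, ?_⟩
          · linear_combination (norm := (simp only [α, β, cm, γ]; ring)) β u * β u' * b1
          · linear_combination (norm := (simp only [α, β, cm, γ]; ring)) x * α u * x * α u' * b2 + x * α u * cm u' * a4 + cm u * β u' * a3
          · linear_combination (norm := (simp only [α, β, cm, γ]; ring)) β u * x * α u' * b3 + β u * cm u' * a1
          · linear_combination (norm := (simp only [α, β, cm, γ]; ring)) x * α u * β u' * b4 + cm u * α u' * a1 + cm u * y * b3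
        · simp [Q, rowTransfer_of_ne _ _ _ _ h0 h1]

end Transfer

section Transfer

variable {R : Type*} [CommRing R]

/-- The symmetry of the partition function in its row parameters. -/
theorem stackZ_perm [IsDomain R] (x y : R) (vs : List R) {us us' : List R} (hp : us.Perm us')
    (h : ∀ u ∈ us, ∀ u' ∈ us, 1 + x * u * u' - (x + 1 - y) * u ≠ 0) (k : List ℤ) :
    stackZ (us.map fun u => vs.map (sixVertex x y u)) k =
      stackZ (us'.map fun u => vs.map (sixVertex x y u)) k := by
  induction hp generalizing k with
  | nil => rfl
  | cons a _ ih =>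
    have ih' := fun k => ih (fun u hu u' hu' => h u (by simp [hu]) u' (by simp [hu'])) k
    simp only [List.map_cons, stackZ]
    congr 1
    exact funext ih'
  | swap a b l =>
    refine mul_left_cancel₀ (h b (by simp) a (by simp)) ?_
    exact (yangBaxter x y b a vs k (stackZ (l.map fun u => vs.map (sixVertex x y u)))).1
  | trans h₁ _ ih₁ ih₂ =>
    rw [ih₁ h, ih₂ fun u hu u' hu' => h u (h₁.mem_iff.2 hu) u' (h₁.mem_iff.2 hu')]

theorem stackZ_one_cons (L : List (VertexWeights R × List (VertexWeights R))) (ks : List ℤ) :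
    stackZ (L.map fun p => p.1 :: p.2) (1 :: ks) =
      (L.map fun p => p.1.w01).prod * stackZ (L.map fun p => p.2) ks := by
  induction L generalizing ks with
  | nil => simp [stackZ]
  | cons p L ih =>
    simp only [List.map_cons, stackZ, rowTransfer_zero_one, List.prod_cons, ih, rowTransfer_mul]
    ring

theorem rowTransfer_one_replicate (F : List (VertexWeights R)) (ψ : List ℤ → R) :
    rowTransfer F 1 (List.replicate F.length 0) ψ =
      (F.map fun c => c.w10).prod * ψ (List.replicate F.length 0) := by
  induction F generalizing ψ with
  | nil => simp [rowTransfer]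
  | cons c F ih =>
    simp only [List.length_cons, List.replicate_succ, rowTransfer_one_zero, ih, List.map_cons,
      List.prod_cons]
    ring

/-- The dependence of the partition function on the weight at the top left corner. -/
theorem stackZ_corner (c : VertexWeights R) (F : List (VertexWeights R))
    (L : List (VertexWeights R × List (VertexWeights R))) :
    stackZ ((c :: F) :: L.map fun p => p.1 :: p.2) (List.replicate (F.length + 1) 0) =
      c.w00 * rowTransfer F 0 (List.replicate F.length 0)
        (fun t => stackZ (L.map fun p => p.1 :: p.2) (0 :: t)) +
      c.cp * ((F.map fun c => c.w10).prod * ((L.map fun p => p.1.w01).prod *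
        stackZ (L.map fun p => p.2) (List.replicate F.length 0))) := by
  simp only [stackZ, List.replicate_succ, rowTransfer_zero_zero, stackZ_one_cons,
    rowTransfer_mul, rowTransfer_one_replicate]
  ring

end Transfer

section Degree

open Polynomial

variable {K : Type*} [Field K]

/-- The space of polynomial functions of degree less than `n`. -/
noncomputable def polyFun (K : Type*) [Field K] (n : ℕ) : Submodule K (K → K) :=
  (degreeLT K n).map (LinearMap.pi fun v => leval v)

theorem mem_polyFun {n : ℕ} {g : K → K} :
    g ∈ polyFun K n ↔ ∃ p : K[X], p.degree < n ∧ ∀ v, p.eval v = g v := by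
  simp [polyFun, mem_degreeLT, funext_iff]

theorem polyFun_mono {m n : ℕ} (h : m ≤ n) : polyFun K m ≤ polyFun K n :=
  Submodule.map_mono (degreeLT_mono h)

theorem const_mem_polyFun {n : ℕ} (r : K) : (fun _ => r) ∈ polyFun K (n + 1) :=
  mem_polyFun.2 ⟨C r, degree_C_le.trans_lt (by exact_mod_cast n.succ_pos), by simp⟩

theorem linear_mul_mem_polyFun {n : ℕ} {g : K → K} (hg : g ∈ polyFun K n) (a b : K) :
    (fun v => (a * v + b) * g v) ∈ polyFun K (n + 1) := by
  obtain ⟨p, hp, h⟩ := mem_polyFun.1 hg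
  refine mem_polyFun.2 ⟨(C a * X + C b) * p, ?_, by simp [h]⟩
  rcases eq_or_ne p 0 with rfl | h0
  · simp
  · refine (degree_mul_le _ _).trans_lt ?_
    rw [degree_eq_natDegree h0] at hp ⊢
    have hl := degree_linear_le (a := a) (b := b)
    calc _ ≤ (1 : WithBot ℕ) + (p.natDegree : WithBot ℕ) := by gcongr
      _ < _ := by
        have : p.natDegree < n := by exact_mod_cast hp
        exact_mod_cast (by omega : 1 + p.natDegree < n + 1)

theorem prod_linear_mul_mem_polyFun {ι : Type*} (s : Finset ι) (a b : ι → K) {n : ℕ} {g : K → K}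
    (hg : g ∈ polyFun K n) :
    (fun v => (∏ i ∈ s, (a i * v + b i)) * g v) ∈ polyFun K (n + #s) := by
  classical
  induction s using Finset.induction_on with
  | empty => simpa using hg
  | insert i s hi ih =>
    have := linear_mul_mem_polyFun ih (a i) (b i)
    rw [card_insert_of_notMem hi]
    rw [← add_assoc]
    convert this using 2 with v
    rw [prod_insert hi, mul_assoc]

/-- A polynomial function of degree less than `n` with `n` distinct zeros vanishes. -/
theorem eq_zero_of_mem_polyFun {n : ℕ} {g : K → K} (hg : g ∈ polyFun K n) (s : Finset K)
    (hs : n ≤ #s) (h : ∀ v ∈ s, g v = 0) : g = 0 := by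
  obtain ⟨p, hp, hpg⟩ := mem_polyFun.1 hg
  have : p = 0 := by
    refine eq_zero_of_degree_lt_of_eval_finset_eq_zero s
      (hp.trans_le (by exact_mod_cast hs)) fun v hv => by rw [hpg, h v hv]
  funext v
  simp [← hpg, this]

theorem rowTransfer_mem (S : Submodule K (K → K)) (F : List (VertexWeights K)) (h : ℤ)
    (ks : List ℤ) (g : List ℤ → K → K) (hg : ∀ t, g t ∈ S) :
    (fun v => rowTransfer F h ks (fun t => g t v)) ∈ S := by
  induction F generalizing h ks g with
  | nil =>
    cases ks with
    | nil =>
      by_cases h1 : h = 1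
      · simpa [rowTransfer, h1] using hg []
      · simp only [rowTransfer, h1, if_false]
        exact S.zero_mem
    | cons => exact S.zero_mem
  | cons c F ih =>
    cases ks with
    | nil => exact S.zero_mem
    | cons k ks =>
      simp only [rowTransfer]
      refine S.add_mem (S.add_mem ?_ ?_) ?_ <;>
      exact S.smul_mem _ (ih _ _ (fun t => g (_ :: t)) fun t => hg _)

theorem stackZ_mem_polyFun (x y : K) (us vs : List K) (ks : List ℤ) :
    (fun v => stackZ (us.map fun u => (v :: vs).map (sixVertex x y u)) (0 :: ks)) ∈
      polyFun K us.length := by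
  have h1 : ∀ (us : List K) (ks : List ℤ),
      (fun v => stackZ (us.map fun u => (v :: vs).map (sixVertex x y u)) (1 :: ks)) ∈
        polyFun K (us.length + 1) := by
    intro us ks
    have h := fun v : K => stackZ_one_cons
      (us.map fun u : K => (sixVertex x y u v, vs.map (sixVertex x y u))) ks
    simp only [List.map_map, Function.comp_def] at h
    simp only [List.map_cons, h]
    clear h
    generalize stackZ (us.map fun u => vs.map (sixVertex x y u)) ks = r
    induction us with
    | nil => simpa using const_mem_polyFun (n := 0) r
    | cons u us ih =>
      rw [List.length_cons]
      convert linear_mul_mem_polyFun ih (- x * (u - 1)) (y + x * (u - 1)) using 1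
      funext v
      simp only [List.map_cons, List.prod_cons, sixVertex]
      ring
  induction us generalizing ks with
  | nil =>
    simp only [List.map_nil, stackZ, List.mem_cons, forall_eq_or_imp, zero_ne_one, false_and,
      if_false]
    exact Submodule.zero_mem _
  | cons u us ih =>
    rw [List.length_cons]
    have e0 := linear_mul_mem_polyFun (rowTransfer_mem _ (vs.map (sixVertex x y u)) 0 ks
      (fun t v => stackZ (us.map fun u => (v :: vs).map (sixVertex x y u)) (0 :: t)) ih)
      (y * u - (u - 1)) (u - 1)
    have e1 := Submodule.smul_mem _ y (rowTransfer_mem _ (vs.map (sixVertex x y u)) 1 ks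
      (fun t v => stackZ (us.map fun u => (v :: vs).map (sixVertex x y u)) (1 :: t)) (h1 us))
    convert Submodule.add_mem _ e0 e1 using 1
    funext v
    simp only [List.map_cons, stackZ, rowTransfer_zero_zero, Pi.add_apply, Pi.smul_apply,
      smul_eq_mul, sixVertex]
    ring

end Degree

section Determinant

/-- The partition function with domain wall boundary conditions, with row parameters `u` and
column parameters `v`. -/
def sixVertexZ {R : Type*} [CommRing R] (x y : R) {m n : ℕ} (u : Fin m → R) (v : Fin n → R) : R :=
  stackZ (List.ofFn fun i => List.ofFn fun j => sixVertex x y (u i) (v j)) (List.replicate n 0)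

/-- The product of the weights of the two kinds of zero entries. -/
def zeroWeight {R : Type*} [CommRing R] (x y u v : R) : R :=
  (y * u * v - (u - 1) * (v - 1)) * (y - x * (u - 1) * (v - 1))

/-- The product of the differences `u i - u j` over `i < j`. -/
def diffProd {R : Type*} [CommRing R] : (n : ℕ) → (Fin n → R) → R
  | 0, _ => 1
  | n + 1, u => (∏ j : Fin n, (u 0 - u j.succ)) * diffProd n (Fin.tail u)

theorem diffProd_succAbove {R : Type*} [CommRing R] {n : ℕ} (u : Fin (n + 1) → R)
    (i : Fin (n + 1)) :
    diffProd (n + 1) u =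
      (-1) ^ (i : ℕ) * (∏ j, (u i - u (i.succAbove j))) * diffProd n (u ∘ i.succAbove) := by
  induction n with
  | zero => simp [diffProd, Fin.fin_one_eq_zero i]
  | succ n ih =>
    induction i using Fin.cases with
    | zero => simp [diffProd]; rfl
    | succ i =>
      have h := ih (Fin.tail u) i
      have e : Fin.tail (u ∘ i.succ.succAbove) = Fin.tail u ∘ i.succAbove := by
        funext j; simp [Fin.tail]
      rw [diffProd, h, diffProd, e, Fin.prod_univ_succAbove _ i, Fin.prod_univ_succ]
      simp [Fin.tail]
      ring

theorem ofFn_perm_succAbove {α : Type*} {n : ℕ} (u : Fin (n + 1) → α) (i : Fin (n + 1)) :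
    (List.ofFn u).Perm (u i :: List.ofFn (u ∘ i.succAbove)) := by
  rw [← Multiset.coe_eq_coe, ← Multiset.cons_coe, ← Fin.univ_val_map, ← Fin.univ_val_map,
    Fin.univ_succAbove n i]
  simp [Function.comp_def]

variable {K : Type*} [Field K]

theorem sixVertexZ_eq_map {R : Type*} [CommRing R] (x y : R) {m n : ℕ} (u : Fin m → R)
    (v : Fin n → R) :
    sixVertexZ x y u v = stackZ ((List.ofFn u).map fun u => (List.ofFn v).map (sixVertex x y u))
      (List.replicate n 0) := by
  simp [sixVertexZ, List.map_ofFn, Function.comp_def]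

/-- The recursion satisfied by the partition function at a zero of a weight. -/
theorem sixVertexZ_recursion (x y : K) {n : ℕ} (u : Fin (n + 1) → K) (v : Fin n → K)
    (hη : ∀ i i', 1 + x * u i * u i' - (x + 1 - y) * u i ≠ 0) (i : Fin (n + 1)) (t : K)
    (ht : y * u i * t - (u i - 1) * (t - 1) = 0) :
    sixVertexZ x y u (Fin.cons t v : Fin (n + 1) → K) =
      y * (∏ j, (y - x * (u i - 1) * (v j - 1))) *
        (∏ k, (y - x * (u (i.succAbove k) - 1) * (t - 1))) *
        sixVertexZ x y (u ∘ i.succAbove) v := by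
  rw [sixVertexZ_eq_map, stackZ_perm x y _ (ofFn_perm_succAbove u i)
    (by simpa only [List.forall_mem_ofFn_iff] using hη)]
  have h := stackZ_corner (sixVertex x y (u i) t) ((List.ofFn v).map (sixVertex x y (u i)))
    ((List.ofFn (u ∘ i.succAbove)).map
      fun u => (sixVertex x y u t, (List.ofFn v).map (sixVertex x y u)))
  simp only [List.map_map, Function.comp_def, List.length_map, List.length_ofFn] at h
  simp only [List.ofFn_succ (f := (Fin.cons t v : Fin (n + 1) → K)), Fin.cons_zero, Fin.cons_succ,
    List.map_cons]
  rw [sixVertexZ_eq_map]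
  refine h.trans ?_
  simp only [sixVertex, ht, zero_mul, zero_add, List.map_ofFn, Function.comp_def, List.prod_ofFn]
  ring

theorem det_expand (x y : K) {n : ℕ} (u : Fin (n + 1) → K) (v : Fin n → K) (t : K)
    (ht : ∀ i, zeroWeight x y (u i) t ≠ 0) :
    (∏ i, ∏ j, zeroWeight x y (u i) ((Fin.cons t v : Fin (n + 1) → K) j)) *
      (Matrix.of fun i j => (zeroWeight x y (u i) ((Fin.cons t v : Fin (n + 1) → K) j))⁻¹).det =
    ∑ i : Fin (n + 1), (∏ k, zeroWeight x y (u (i.succAbove k)) t) * ((-1) ^ (i : ℕ) *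
      ((∏ i, ∏ j, zeroWeight x y (u i) (v j)) *
      (Matrix.of fun k j => (zeroWeight x y (u (i.succAbove k)) (v j))⁻¹).det)) := by
  rw [Matrix.det_succ_column_zero, mul_sum]
  refine sum_congr rfl fun i _ => ?_
  have e0 : ∀ i, ∏ j, zeroWeight x y (u i) ((Fin.cons t v : Fin (n + 1) → K) j) =
      zeroWeight x y (u i) t * ∏ j, zeroWeight x y (u i) (v j) := by
    intro i
    simp [Fin.prod_univ_succ]
  simp only [e0, Fin.cons_zero, prod_mul_distrib, Matrix.of_apply]
  have e : (∏ i, zeroWeight x y (u i) t) * (zeroWeight x y (u i) t)⁻¹ =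
      ∏ k, zeroWeight x y (u (i.succAbove k)) t := by
    rw [Fin.prod_univ_succAbove _ i]
    field_simp [ht i]
  have e2 : (Matrix.of fun i j => (zeroWeight x y (u i)
      ((Fin.cons t v : Fin (n + 1) → K) j))⁻¹).submatrix i.succAbove Fin.succ =
      Matrix.of fun k j => (zeroWeight x y (u (i.succAbove k)) (v j))⁻¹ := by
    ext; simp
  rw [e2, ← e]
  ring

theorem diffProd_cons {n : ℕ} (v : Fin n → K) (t : K) :
    diffProd (n + 1) (Fin.cons t v : Fin (n + 1) → K) = (∏ j, (t - v j)) * diffProd n v := by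
  simp [diffProd]

/-- The Izergin-Korepin determinant formula. -/
theorem izergin_korepin {x y : K} (hy : y ≠ 0) {n : ℕ} (u v : Fin n → K)
    (hu : Function.Injective u) (hv : Function.Injective v)
    (hw : ∀ i j, zeroWeight x y (u i) (v j) ≠ 0) (hd : ∀ i, (y - 1) * u i + 1 ≠ 0)
    (hη : ∀ i i', 1 + x * u i * u i' - (x + 1 - y) * u i ≠ 0) :
    y ^ n.choose 2 * diffProd n u * diffProd n v * sixVertexZ x y u v =
      y ^ n * ((∏ i, ∏ j, zeroWeight x y (u i) (v j)) *
        (Matrix.of fun i j => (zeroWeight x y (u i) (v j))⁻¹).det) := by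
  classical
  induction n with
  | zero => simp [diffProd, sixVertexZ, stackZ]
  | succ n ih =>
    set v' : Fin n → K := Fin.tail v
    have hvc : v = Fin.cons (v 0) v' := (Fin.cons_self_tail v).symm
    have hw' : ∀ i j, zeroWeight x y (u i) (v' j) ≠ 0 := fun i j => hw i j.succ
    let P : K → K := fun t => y ^ (n + 1).choose 2 * diffProd (n + 1) u *
      ((∏ j, (t - v' j)) * diffProd n v') * sixVertexZ x y u (Fin.cons t v' : Fin (n + 1) → K)
    let Q : K → K := fun t => ∑ i : Fin (n + 1), (∏ k, zeroWeight x y (u (i.succAbove k)) t) *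
      ((-1) ^ (i : ℕ) * ((∏ i, ∏ j, zeroWeight x y (u i) (v' j)) *
      (Matrix.of fun k j => (zeroWeight x y (u (i.succAbove k)) (v' j))⁻¹).det))
    have hQ : ∀ t, (∀ i, zeroWeight x y (u i) t ≠ 0) → Q t =
        (∏ i, ∏ j, zeroWeight x y (u i) ((Fin.cons t v' : Fin (n + 1) → K) j)) *
        (Matrix.of fun i j =>
          (zeroWeight x y (u i) ((Fin.cons t v' : Fin (n + 1) → K) j))⁻¹).det :=
      fun t ht => (det_expand x y u v' t ht).symm
    suffices h : (fun t => P t - y ^ (n + 1) * Q t) = 0 by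
      have h0 := congrFun h (v 0)
      simp only [P, Pi.zero_apply] at h0
      rw [hQ _ fun i => hw i 0, ← hvc, ← diffProd_cons, ← hvc] at h0
      exact sub_eq_zero.1 h0
    let ζ : Fin (n + 1) → K := fun i => (1 - u i) / ((y - 1) * u i + 1)
    have hζ : ∀ i t, y * u i * t - (u i - 1) * (t - 1) = ((y - 1) * u i + 1) * (t - ζ i) := by
      intro i t
      have h : ((y - 1) * u i + 1) * ζ i = 1 - u i := mul_div_cancel₀ _ (hd i)
      linear_combination h
    have hζ' : ∀ i k, y * u k * ζ i - (u k - 1) * (ζ i - 1) =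
        y * (u k - u i) / ((y - 1) * u i + 1) := by
      intro i k
      have h : ((y - 1) * u i + 1) * ζ i = 1 - u i := mul_div_cancel₀ _ (hd i)
      rw [eq_div_iff (hd i)]
      linear_combination ((y - 1) * u k + 1) * h
    have hζinj : Function.Injective ζ := by
      intro i k hik
      have h1 := hζ' i k
      rw [hik, hζ k, sub_self, mul_zero] at h1
      have h2 := (div_eq_zero_iff.1 h1.symm).resolve_right (hd i)
      exact (hu (sub_eq_zero.1 ((mul_eq_zero.1 h2).resolve_left hy))).symm
    have hζv : ∀ i j, ζ i ≠ v' j := by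
      intro i j h
      apply hw' i j
      rw [zeroWeight, hζ, ← h, sub_self, mul_zero, zero_mul]
    refine eq_zero_of_mem_polyFun (n := n + n + 1) ?_ (univ.image ζ ∪ univ.image v') ?_ ?_
    · have hP : P ∈ polyFun K (n + n + 1) := by
        have h := stackZ_mem_polyFun x y (List.ofFn u) (List.ofFn v') (List.replicate n 0)
        rw [List.length_ofFn] at h
        have h' := Submodule.smul_mem _ (y ^ (n + 1).choose 2 * diffProd (n + 1) u * diffProd n v')
          (prod_linear_mul_mem_polyFun univ (fun _ : Fin n => 1) (fun j => -v' j) h)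
        rw [card_univ, Fintype.card_fin, add_right_comm] at h'
        convert h' using 1
        funext t
        simp only [P, sixVertexZ_eq_map, List.ofFn_succ, Fin.cons_zero, Fin.cons_succ, one_mul,
          Pi.smul_apply, smul_eq_mul, List.replicate_succ, ← sub_eq_add_neg]
        ring
      have hQ' : Q ∈ polyFun K (n + n + 1) := by
        have e : Q = ∑ i : Fin (n + 1), fun t =>
            (∏ k, zeroWeight x y (u (i.succAbove k)) t) *
              ((-1) ^ (i : ℕ) * ((∏ i, ∏ j, zeroWeight x y (u i) (v' j)) *
              (Matrix.of fun k j => (zeroWeight x y (u (i.succAbove k)) (v' j))⁻¹).det)) := by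
          funext t
          simp [Q]
        rw [e]
        refine Submodule.sum_mem _ fun i _ => ?_
        generalize (-1) ^ (i : ℕ) * ((∏ i, ∏ j, zeroWeight x y (u i) (v' j)) *
          (Matrix.of fun k j => (zeroWeight x y (u (i.succAbove k)) (v' j))⁻¹).det) = r
        have h := prod_linear_mul_mem_polyFun univ
          (fun k => y * u (i.succAbove k) - (u (i.succAbove k) - 1))
          (fun k => u (i.succAbove k) - 1) (prod_linear_mul_mem_polyFun univ
          (fun k => -x * (u (i.succAbove k) - 1))
          (fun k => y + x * (u (i.succAbove k) - 1)) (const_mem_polyFun (n := 0) r))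
        rw [card_univ, Fintype.card_fin] at h
        refine polyFun_mono (by omega) (?_ : _ ∈ polyFun K (0 + 1 + n + n))
        convert h using 1
        funext t
        rw [← mul_assoc, ← prod_mul_distrib]
        congr 1
        refine prod_congr rfl fun k _ => ?_
        rw [zeroWeight]
        ring
      exact Submodule.sub_mem _ hP (Submodule.smul_mem _ _ hQ')
    · rw [card_union_of_disjoint, card_image_of_injective _ hζinj, card_image_of_injective]
      · simp
      · exact fun a b h => Fin.succ_injective _ (hv h)
      · rw [disjoint_left]
        simp only [mem_image, mem_univ, true_and]
        rintro _ ⟨i, rfl⟩ ⟨j, h⟩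
        exact hζv i j h.symm
    · intro t ht
      simp only [mem_union, mem_image, mem_univ, true_and] at ht
      rcases ht with ⟨i, rfl⟩ | ⟨j, rfl⟩
      · have h := ih (u ∘ i.succAbove) v' (hu.comp Fin.succAbove_right_injective)
          (hv.comp (Fin.succ_injective n)) (fun k j => hw' _ j) (fun k => hd _) (fun k l => hη _ _)
        have hQi : Q (ζ i) = (∏ k, zeroWeight x y (u (i.succAbove k)) (ζ i)) * ((-1) ^ (i : ℕ) *
            ((∏ i, ∏ j, zeroWeight x y (u i) (v' j)) *
            (Matrix.of fun k j => (zeroWeight x y (u (i.succAbove k)) (v' j))⁻¹).det)) := by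
          refine sum_eq_single_of_mem i (mem_univ i) fun k _ hk => ?_
          obtain ⟨l, hl⟩ := Fin.exists_succAbove_eq hk.symm
          rw [prod_eq_zero (mem_univ l) (by rw [hl, zeroWeight, hζ, sub_self, mul_zero, zero_mul]),
            zero_mul]
        have hpair : (∏ k, (y * u (i.succAbove k) * ζ i - (u (i.succAbove k) - 1) * (ζ i - 1))) *
            ∏ j, (y * u i * v' j - (u i - 1) * (v' j - 1)) =
            y ^ n * ((∏ k, (u i - u (i.succAbove k))) * ∏ j, (ζ i - v' j)) := by
          have e : y ^ n = ∏ _k : Fin n, y := by simp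
          rw [e]
          simp only [← prod_mul_distrib]
          refine prod_congr rfl fun k _ => ?_
          rw [hζ' i, hζ i]
          rw [div_mul_eq_mul_div, div_eq_iff (hd i)]
          ring
        have hchoose : (n + 1).choose 2 = n + n.choose 2 := by
          rw [Nat.choose_succ_succ' n 1, Nat.choose_one_right]
        simp only [P]
        rw [hQi, sixVertexZ_recursion x y u v' hη i (ζ i) (by rw [hζ, sub_self, mul_zero]),
          diffProd_succAbove u i, hchoose, Fin.prod_univ_succAbove _ i]
        simp only [Function.comp_apply] at h
        simp only [zeroWeight, prod_mul_distrib] at h ⊢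
        rw [pow_add, pow_succ]
        generalize (Matrix.of fun k j => _ : Matrix (Fin n) (Fin n) K).det = D at h ⊢
        linear_combination (y ^ n * (-1) ^ (i : ℕ) * (∏ k, (u i - u (i.succAbove k))) *
          (∏ j, (ζ i - v' j)) * y * (∏ j, (y - x * (u i - 1) * (v' j - 1))) *
          ∏ k, (y - x * (u (i.succAbove k) - 1) * (ζ i - 1))) * h -
          (y ^ n * y * (-1) ^ (i : ℕ) * (∏ k, (y - x * (u (i.succAbove k) - 1) * (ζ i - 1))) *
          (∏ j, (y - x * (u i - 1) * (v' j - 1))) *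
          (∏ k, ∏ j, (y * u (i.succAbove k) * v' j - (u (i.succAbove k) - 1) * (v' j - 1))) *
          (∏ k, ∏ j, (y - x * (u (i.succAbove k) - 1) * (v' j - 1))) * D) * hpair
      · have hdet : (Matrix.of fun i k =>
            (zeroWeight x y (u i) ((Fin.cons (v' j) v' : Fin (n + 1) → K) k))⁻¹).det = 0 :=
          Matrix.det_zero_of_column_eq (Fin.succ_ne_zero j).symm (by simp)
        rw [hQ _ fun i => hw' i j, hdet]
        simp only [P, prod_eq_zero (f := fun k => v' j - v' k) (mem_univ j) (sub_self (v' j))]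
        ring

end Determinant

section Condensation

/-- The Desnanot-Jacobi identity. -/
theorem desnanot_jacobi {R : Type*} [CommRing R] {n : ℕ}
    (M : Matrix (Fin (n + 2)) (Fin (n + 2)) R) :
    M.det * (M.submatrix (fun i : Fin n => i.succ.castSucc) fun i => i.succ.castSucc).det =
      (M.submatrix Fin.succ Fin.succ).det * (M.submatrix Fin.castSucc Fin.castSucc).det -
      (M.submatrix Fin.succ Fin.castSucc).det * (M.submatrix Fin.castSucc Fin.succ).det := by
  classical
  let g : Fin n ⊕ Fin 2 → Fin (n + 2) := Sum.elim (fun i => i.succ.castSucc) ![0, Fin.last _]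
  have hg : Function.Bijective g := by
    rw [Fintype.bijective_iff_injective_and_card]
    refine ⟨Function.Injective.sumElim ?_ ?_ ?_, by simp⟩
    · intro a b h
      simpa using h
    · intro a b h
      fin_cases a <;> fin_cases b <;> simp_all [Fin.ext_iff]
    · intro a b
      fin_cases b
      · simp [Fin.ext_iff]
      · simp [Fin.ext_iff]
        omega
  let e := Equiv.ofBijective g hg
  have key : ∀ {S : Type} [CommRing S] [IsDomain S] (N : Matrix (Fin (n + 2)) (Fin (n + 2)) S),
      N.det ≠ 0 →
      N.det * (N.submatrix (fun i : Fin n => i.succ.castSucc) fun i => i.succ.castSucc).det =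
      (N.submatrix Fin.succ Fin.succ).det * (N.submatrix Fin.castSucc Fin.castSucc).det -
      (N.submatrix Fin.succ Fin.castSucc).det * (N.submatrix Fin.castSucc Fin.succ).det := by
    intro S _ _ N hN
    have h := Matrix.mul_adjugate (N.submatrix e e)
    rw [← Matrix.fromBlocks_toBlocks (N.submatrix e e), ← Matrix.fromBlocks_toBlocks
      (Matrix.fromBlocks _ _ _ _).adjugate, Matrix.fromBlocks_multiply,
      ← Matrix.fromBlocks_one, Matrix.fromBlocks_smul, Matrix.fromBlocks_inj,
      Matrix.fromBlocks_toBlocks] at h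
    obtain ⟨-, h1, -, h2⟩ := h
    set B := N.submatrix e e
    have h3 : Matrix.fromBlocks B.toBlocks₁₁ B.toBlocks₁₂ B.toBlocks₂₁ B.toBlocks₂₂ *
        Matrix.fromBlocks 1 B.adjugate.toBlocks₁₂ 0 B.adjugate.toBlocks₂₂ =
        Matrix.fromBlocks B.toBlocks₁₁ 0 B.toBlocks₂₁ (B.det • 1) := by
      rw [Matrix.fromBlocks_multiply]
      simp [h1, h2]
    have h4 := congrArg Matrix.det h3
    rw [Matrix.det_mul, Matrix.fromBlocks_toBlocks, Matrix.det_fromBlocks_zero₂₁,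
      Matrix.det_fromBlocks_zero₁₂, Matrix.det_one, one_mul, Matrix.det_smul, Matrix.det_one,
      Matrix.det_fin_two] at h4
    have hB : B.det = N.det := Matrix.det_submatrix_equiv_self e N
    have hadj : B.adjugate = N.adjugate.submatrix e e := Matrix.adjugate_submatrix_equiv_self e N
    have h11 : B.toBlocks₁₁ =
        N.submatrix (fun i : Fin n => i.succ.castSucc) fun i => i.succ.castSucc := rfl
    have e0 : e (Sum.inr 0) = 0 := rfl
    have e1 : e (Sum.inr 1) = Fin.last _ := rfl
    have hs : ((-1 : S) ^ (n + 1)) * (-1) ^ (n + 1) = 1 := by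
      rw [← mul_pow]; simp
    simp only [hadj, hB, h11, Matrix.toBlocks₂₂, Matrix.of_apply, Matrix.submatrix_apply, e0, e1,
      Matrix.adjugate_fin_succ_eq_det_submatrix, Fin.succAbove_zero, Fin.succAbove_last,
      Fin.val_zero, Fin.val_last, Fintype.card_fin, zero_add, add_zero, pow_zero, one_mul,
      mul_one, pow_add _ (n + 1) (n + 1)] at h4
    refine mul_left_cancel₀ hN ?_
    linear_combination -h4 + N.det * ((N.submatrix Fin.succ Fin.succ).det *
      (N.submatrix Fin.castSucc Fin.castSucc).det -
      (N.submatrix Fin.succ Fin.castSucc).det * (N.submatrix Fin.castSucc Fin.succ).det) * hs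
  have h := congrArg (MvPolynomial.eval₂Hom (Int.castRingHom R) fun p => M p.1 p.2)
    (key (Matrix.mvPolynomialX _ _ ℤ) (Matrix.det_mvPolynomialX_ne_zero _ ℤ))
  simp only [map_mul, map_sub, RingHom.map_det] at h
  convert h using 4 <;> ext <;> simp
end Condensation

section Quadratic

theorem prod_univ_ends {R : Type*} [CommMonoid R] {n : ℕ} (f : Fin (n + 2) → R) :
    ∏ i, f i = f 0 * (∏ i : Fin n, f i.succ.castSucc) * f (Fin.last _) := by
  rw [Fin.prod_univ_succ, Fin.prod_univ_castSucc]
  simp [mul_assoc]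

theorem prod_prod_ends {R : Type*} [CommRing R] {n : ℕ} (f : Fin (n + 2) → Fin (n + 2) → R) :
    (∏ i, ∏ j, f i j) * ∏ i : Fin n, ∏ j : Fin n, f i.succ.castSucc j.succ.castSucc =
      f 0 (Fin.last _) * f (Fin.last _) 0 * (∏ i : Fin (n + 1), ∏ j : Fin (n + 1),
        f i.succ j.succ) * ∏ i : Fin (n + 1), ∏ j : Fin (n + 1), f i.castSucc j.castSucc ∧
    (∏ i, ∏ j, f i j) * ∏ i : Fin n, ∏ j : Fin n, f i.succ.castSucc j.succ.castSucc =
      f 0 0 * f (Fin.last _) (Fin.last _) * (∏ i : Fin (n + 1), ∏ j : Fin (n + 1),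
        f i.succ j.castSucc) * ∏ i : Fin (n + 1), ∏ j : Fin (n + 1), f i.castSucc j.succ := by
  have hs : ∀ g : Fin (n + 2) → R, ∏ i : Fin (n + 1), g i.succ =
      (∏ i : Fin n, g i.succ.castSucc) * g (Fin.last _) :=
    fun g => Fin.prod_univ_castSucc fun i => g i.succ
  have hc : ∀ g : Fin (n + 2) → R, ∏ i : Fin (n + 1), g i.castSucc =
      g 0 * ∏ i : Fin n, g i.succ.castSucc :=
    fun g => Fin.prod_univ_succ fun i => g i.castSucc
  constructor <;>
  · simp only [prod_univ_ends, fun i => hs (f i), fun i => hc (f i),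
      hs fun i => (∏ j : Fin n, f i j.succ.castSucc) * f i (Fin.last _),
      hc fun i => (∏ j : Fin n, f i j.succ.castSucc) * f i (Fin.last _),
      hs fun i => f i 0 * (∏ j : Fin n, f i j.succ.castSucc),
      hc fun i => f i 0 * (∏ j : Fin n, f i j.succ.castSucc), prod_mul_distrib]
    ring

theorem diffProd_ends {R : Type*} [CommRing R] {n : ℕ} (u : Fin (n + 2) → R) :
    diffProd (n + 2) u * diffProd n (fun i => u i.succ.castSucc) =
      (u 0 - u (Fin.last _)) * diffProd (n + 1) (fun i => u i.succ) *
        diffProd (n + 1) (fun i => u i.castSucc) := by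
  rw [diffProd, Fin.prod_univ_castSucc]
  simp only [diffProd, Fin.tail_def, Fin.succ_last, Fin.castSucc_zero, Fin.succ_castSucc]
  ring

/-- The quadratic relation between partition functions, at generic parameters in a field. -/
theorem sixVertexZ_quadratic_of_ne {K : Type*} [Field K] {x y : K} (hy : y ≠ 0) {n : ℕ}
    (u v : Fin (n + 2) → K)
    (hu : Function.Injective u) (hv : Function.Injective v)
    (hw : ∀ i j, zeroWeight x y (u i) (v j) ≠ 0) (hd : ∀ i, (y - 1) * u i + 1 ≠ 0)
    (hη : ∀ i i', 1 + x * u i * u i' - (x + 1 - y) * u i ≠ 0) :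
    y * (u 0 - u (Fin.last _)) * (v 0 - v (Fin.last _)) * sixVertexZ x y u v *
      sixVertexZ x y (fun i : Fin n => u i.succ.castSucc) (fun i : Fin n => v i.succ.castSucc) =
    zeroWeight x y (u 0) (v (Fin.last _)) * zeroWeight x y (u (Fin.last _)) (v 0) *
      sixVertexZ x y (fun i => u i.succ) (fun i => v i.succ) *
      sixVertexZ x y (fun i => u i.castSucc) (fun i => v i.castSucc) -
    zeroWeight x y (u 0) (v 0) * zeroWeight x y (u (Fin.last _)) (v (Fin.last _)) *
      sixVertexZ x y (fun i => u i.succ) (fun i => v i.castSucc) *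
      sixVertexZ x y (fun i => u i.castSucc) (fun i => v i.succ) := by
  have hs := Fin.succ_injective (n + 1)
  have hc := Fin.castSucc_injective (n + 1)
  have hm : Function.Injective fun i : Fin n => i.succ.castSucc :=
    (Fin.castSucc_injective _).comp (Fin.succ_injective n)
  have IK := fun {m : ℕ} {f g : Fin m → Fin (n + 2)} (hf : Function.Injective f)
    (hg : Function.Injective g) => izergin_korepin hy (fun i => u (f i)) (fun i => v (g i))
      (hu.comp hf) (hv.comp hg) (fun i j => hw _ _) (fun i => hd _) fun i j => hη _ _
  have k0 := izergin_korepin hy u v hu hv hw hd hη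
  have k1 := IK hm hm
  have k2 := IK hs hs
  have k3 := IK hc hc
  have k4 := IK hs hc
  have k5 := IK hc hs
  have DJ := desnanot_jacobi (Matrix.of fun i j => (zeroWeight x y (u i) (v j))⁻¹)
  obtain ⟨w1, w2⟩ := prod_prod_ends fun i j => zeroWeight x y (u i) (v j)
  have du := diffProd_ends u
  have dv := diffProd_ends v
  have c1 : (n + 1).choose 2 = n.choose 2 + n := by
    rw [Nat.choose_succ_succ' n 1, Nat.choose_one_right, add_comm]
  have c2 : (n + 2).choose 2 = n.choose 2 + n + n + 1 := by
    rw [Nat.choose_succ_succ' (n + 1) 1, Nat.choose_one_right, c1]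
    ring
  have hD : ∀ {m : ℕ} (f : Fin m → K), Function.Injective f → diffProd m f ≠ 0 := by
    intro m
    induction m with
    | zero => simp [diffProd]
    | succ m ih =>
      intro f hf
      refine mul_ne_zero (prod_ne_zero_iff.2 fun j _ => sub_ne_zero.2 fun h => ?_)
        (ih _ (hf.comp (Fin.succ_injective m)))
      exact (Fin.succ_ne_zero j).symm (hf h)
  have hM := mul_ne_zero (pow_ne_zero 2 (pow_ne_zero ((n + 1).choose 2) hy))
    (mul_ne_zero (mul_ne_zero (hD _ (hu.comp hs)) (hD _ (hu.comp hc)))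
      (mul_ne_zero (hD _ (hv.comp hs)) (hD _ (hv.comp hc))))
  refine mul_left_cancel₀ hM ?_
  simp only [c1, c2, pow_add, pow_one, pow_two, Function.comp_def] at *
  generalize y ^ n.choose 2 = p at *
  generalize y ^ n = q at *
  simp only [Matrix.submatrix, Matrix.of_apply] at *
  generalize (∏ i, ∏ j, zeroWeight x y (u i) (v j)) = W at *
  generalize (Matrix.of fun i j => (zeroWeight x y (u i) (v j))⁻¹).det = d at *
  generalize sixVertexZ x y u v = Z at *
  generalize diffProd (n + 2) u = Du at *
  generalize diffProd (n + 2) v = Dv at *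
  generalize (∏ i : Fin n, ∏ j : Fin n, zeroWeight x y (u i.succ.castSucc) (v j.succ.castSucc)) = Wmm at *
  generalize (Matrix.of fun i j : Fin n => (zeroWeight x y (u i.succ.castSucc) (v j.succ.castSucc))⁻¹).det = dmm at *
  generalize sixVertexZ x y (fun i : Fin n => u i.succ.castSucc) (fun j : Fin n => v j.succ.castSucc) = Zmm at *
  generalize (∏ i : Fin (n + 1), ∏ j : Fin (n + 1), zeroWeight x y (u i.succ) (v j.succ)) = Wss at *
  generalize (Matrix.of fun i j : Fin (n + 1) => (zeroWeight x y (u i.succ) (v j.succ))⁻¹).det = dss at *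
  generalize sixVertexZ x y (fun i : Fin (n + 1) => u i.succ) (fun j : Fin (n + 1) => v j.succ) = Zss at *
  generalize (∏ i : Fin (n + 1), ∏ j : Fin (n + 1), zeroWeight x y (u i.castSucc) (v j.castSucc)) = Wcc at *
  generalize (Matrix.of fun i j : Fin (n + 1) => (zeroWeight x y (u i.castSucc) (v j.castSucc))⁻¹).det = dcc at *
  generalize sixVertexZ x y (fun i : Fin (n + 1) => u i.castSucc) (fun j : Fin (n + 1) => v j.castSucc) = Zcc at *
  generalize (∏ i : Fin (n + 1), ∏ j : Fin (n + 1), zeroWeight x y (u i.succ) (v j.castSucc)) = Wsc at *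
  generalize (Matrix.of fun i j : Fin (n + 1) => (zeroWeight x y (u i.succ) (v j.castSucc))⁻¹).det = dsc at *
  generalize sixVertexZ x y (fun i : Fin (n + 1) => u i.succ) (fun j : Fin (n + 1) => v j.castSucc) = Zsc at *
  generalize (∏ i : Fin (n + 1), ∏ j : Fin (n + 1), zeroWeight x y (u i.castSucc) (v j.succ)) = Wcs at *
  generalize (Matrix.of fun i j : Fin (n + 1) => (zeroWeight x y (u i.castSucc) (v j.succ))⁻¹).det = dcs at *
  generalize sixVertexZ x y (fun i : Fin (n + 1) => u i.castSucc) (fun j : Fin (n + 1) => v j.succ) = Zcs at *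
  generalize diffProd _ (fun i : Fin n => u i.succ.castSucc) = Dum at *
  generalize diffProd _ (fun i : Fin n => v i.succ.castSucc) = Dvm at *
  generalize diffProd _ (fun i : Fin (n + 1) => u i.succ) = Dus at *
  generalize diffProd _ (fun i : Fin (n + 1) => v i.succ) = Dvs at *
  generalize diffProd _ (fun i : Fin (n + 1) => u i.castSucc) = Duc at *
  generalize diffProd _ (fun i : Fin (n + 1) => v i.castSucc) = Dvc at *
  generalize zeroWeight x y (u 0) (v (Fin.last (n + 1))) * zeroWeight x y (u (Fin.last (n + 1))) (v 0) = A at *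
  generalize zeroWeight x y (u 0) (v 0) * zeroWeight x y (u (Fin.last (n + 1))) (v (Fin.last (n + 1))) = B at *
  linear_combination (-(p ^ 2 * q ^ 2 * y * Z * Zmm * Dv * Dvm)) * du -
    p ^ 2 * q ^ 2 * y * Z * Zmm * ((u 0 - u (Fin.last (n + 1))) * Dus * Duc) * dv +
    (p * Dum * Dvm * Zmm) * k0 + (q * (y * y) * (W * d)) * k1 -
    A * ((p * q * Duc * Dvc * Zcc) * k2 + (q * y * (Wss * dss)) * k3) +
    B * ((p * q * Duc * Dvs * Zcs) * k4 + (q * y * (Wsc * dsc)) * k5) +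
    q ^ 2 * y ^ 2 * (W * Wmm * DJ + dss * dcc * w1 - dsc * dcs * w2)

theorem map_sixVertexZ {R S : Type*} [CommRing R] [CommRing S] (f : R →+* S) (x y : R) {m n : ℕ}
    (u : Fin m → R) (v : Fin n → R) :
    f (sixVertexZ x y u v) = sixVertexZ (f x) (f y) (fun i => f (u i)) (fun j => f (v j)) := by
  simp only [sixVertexZ, map_stackZ, List.map_ofFn, Function.comp_def, VertexWeights.map,
    sixVertex, map_sub, map_mul, map_add, map_pow, map_one]

theorem map_zeroWeight {R S : Type*} [CommRing R] [CommRing S] (f : R →+* S) (x y u v : R) :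
    f (zeroWeight x y u v) = zeroWeight (f x) (f y) (f u) (f v) := by
  simp [zeroWeight]

/-- The quadratic relation between partition functions. -/
theorem sixVertexZ_quadratic {R : Type*} [CommRing R] (x y : R) {n : ℕ} (u v : Fin (n + 2) → R) :
    y * (u 0 - u (Fin.last _)) * (v 0 - v (Fin.last _)) * sixVertexZ x y u v *
      sixVertexZ x y (fun i : Fin n => u i.succ.castSucc) (fun i : Fin n => v i.succ.castSucc) =
    zeroWeight x y (u 0) (v (Fin.last _)) * zeroWeight x y (u (Fin.last _)) (v 0) *
      sixVertexZ x y (fun i => u i.succ) (fun i => v i.succ) *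
      sixVertexZ x y (fun i => u i.castSucc) (fun i => v i.castSucc) -
    zeroWeight x y (u 0) (v 0) * zeroWeight x y (u (Fin.last _)) (v (Fin.last _)) *
      sixVertexZ x y (fun i => u i.succ) (fun i => v i.castSucc) *
      sixVertexZ x y (fun i => u i.castSucc) (fun i => v i.succ) := by
  let P := MvPolynomial (Bool ⊕ (Fin (n + 2) ⊕ Fin (n + 2))) ℤ
  let F := FractionRing P
  let X : Bool ⊕ (Fin (n + 2) ⊕ Fin (n + 2)) → P := MvPolynomial.X
  let ι : P →+* F := algebraMap P F
  have hι : Function.Injective ι := IsFractionRing.injective P F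
  have hX : Function.Injective X := MvPolynomial.X_injective
  have hne : ∀ p : P, MvPolynomial.eval (fun _ => (1 : ℤ)) p = 1 → ι p ≠ 0 := by
    intro p hp h
    rw [map_eq_zero_iff ι hι] at h
    simp [h] at hp
  have key := sixVertexZ_quadratic_of_ne (x := ι (X (.inl true))) (y := ι (X (.inl false)))
    (hne _ (by simp [X])) (fun i => ι (X (.inr (.inl i)))) (fun i => ι (X (.inr (.inr i))))
    (fun i j h => by simpa using hX (hι h)) (fun i j h => by simpa using hX (hι h))
    (fun i j => by
      have := hne (zeroWeight (X (.inl true)) (X (.inl false)) (X (.inr (.inl i)))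
        (X (.inr (.inr j)))) (by simp [X, zeroWeight])
      simpa [zeroWeight] using this)
    (fun i => by
      have := hne ((X (.inl false) - 1) * X (.inr (.inl i)) + 1) (by simp [X])
      simpa using this)
    (fun i i' => by
      have := hne (1 + X (.inl true) * X (.inr (.inl i)) * X (.inr (.inl i')) -
        (X (.inl true) + 1 - X (.inl false)) * X (.inr (.inl i))) (by simp [X])
      simpa using this)
  simp only [← map_sixVertexZ, ← map_zeroWeight, ← map_mul, ← map_sub] at key
  have h := congrArg (MvPolynomial.eval₂Hom (Int.castRingHom R)
    (Sum.elim (fun b => if b then x else y) (Sum.elim u v))) (hι key)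
  simpa only [X, map_mul, map_sub, map_sixVertexZ, map_zeroWeight, MvPolynomial.coe_eval₂Hom,
    MvPolynomial.eval₂_X, Sum.elim_inl, Sum.elim_inr, if_true, reduceIte, Bool.false_eq_true]
    using h

end Quadratic

section Bridge

variable {R : Type*} [CommRing R]

open Classical in
/-- The partition function of the alternating sign matrices of size `n` with local weights `f`. -/
noncomputable def asmZ {n : ℕ} (f : Fin n → Fin n → VertexWeights R) : R :=
  ∑ e : Fin n → Fin n → Fin 3, if IsASM (asmMat e) then
    ∏ i, ∏ j, (f i j).ev (∑ j' with j' < j, asmMat e i j') (∑ i' with i' < i, asmMat e i' j)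
      (asmMat e i j) else 0

theorem sum_lt_zero {n : ℕ} (a : Fin (n + 1) → ℤ) : ∑ j' with j' < 0, a j' = 0 := by
  simp

theorem sum_lt_succ {n : ℕ} (a : Fin (n + 1) → ℤ) (j : Fin n) :
    ∑ j' with j' < j.succ, a j' = a 0 + ∑ j' with j' < j, a j'.succ := by
  simp [sum_filter, Fin.sum_univ_succ]

theorem rowTransfer_ofFn {n : ℕ} (c : Fin n → VertexWeights R) (h : ℤ) (k : Fin n → ℤ)
    (ψ : List ℤ → R) :
    rowTransfer (List.ofFn c) h (List.ofFn k) ψ = ∑ r : Fin n → Fin 3,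
      if h + ∑ j, ((r j : ℤ) - 1) = 1 then
        (∏ j, (c j).ev (h + ∑ j' with j' < j, ((r j' : ℤ) - 1)) (k j) ((r j : ℤ) - 1)) *
          ψ (List.ofFn fun j => k j + ((r j : ℤ) - 1)) else 0 := by
  induction n generalizing h ψ with
  | zero => simp [rowTransfer]
  | succ n ih =>
    rw [List.ofFn_succ, List.ofFn_succ, rowTransfer, ih, ih, ih,
      ← (Fin.consEquiv fun _ => Fin 3).sum_comp, Fintype.sum_prod_type, Fin.sum_univ_three]
    simp only [mul_sum, Fin.consEquiv, Equiv.coe_fn_mk, Fin.sum_univ_succ, Fin.prod_univ_succ,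
      Fin.cons_zero, Fin.cons_succ, List.ofFn_succ, mul_ite, mul_zero, ← add_assoc,
      sum_lt_zero, sum_lt_succ, mul_assoc]
    simp

theorem stackZ_ofFn {m n : ℕ} (f : Fin m → Fin n → VertexWeights R) (k : Fin n → ℤ) :
    stackZ (List.ofFn fun i => List.ofFn (f i)) (List.ofFn k) = ∑ e : Fin m → Fin n → Fin 3,
      if (∀ i, ∑ j, ((e i j : ℤ) - 1) = 1) ∧ (∀ j, k j + ∑ i, ((e i j : ℤ) - 1) = 1) then
        ∏ i, ∏ j, (f i j).ev (∑ j' with j' < j, ((e i j' : ℤ) - 1))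
          (k j + ∑ i' with i' < i, ((e i' j : ℤ) - 1)) ((e i j : ℤ) - 1) else 0 := by
  induction m generalizing k with
  | zero => simp [stackZ]
  | succ m ih =>
    rw [List.ofFn_succ, stackZ, rowTransfer_ofFn,
      ← (Fin.consEquiv fun _ => Fin n → Fin 3).sum_comp, Fintype.sum_prod_type]
    simp only [ih, Fin.consEquiv, Equiv.coe_fn_mk, Fin.sum_univ_succ, Fin.prod_univ_succ,
      Fin.cons_zero, Fin.cons_succ, sum_lt_zero, sum_lt_succ, Fin.forall_fin_succ, add_zero,
      zero_add, ← add_assoc, mul_sum, mul_ite, mul_zero]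
    refine sum_congr rfl fun r _ => ?_
    by_cases hr : ∑ j, ((r j : ℤ) - 1) = 1
    · simp only [hr, true_and, if_true]
    · simp only [hr, false_and, if_false, sum_const_zero]

theorem VertexWeights.ev_ne_zero {c : VertexWeights R} {h k a : ℤ} (hc : c.ev h k a ≠ 0) :
    (h + a = 0 ∨ h + a = 1) ∧ (k + a = 0 ∨ k + a = 1) := by
  unfold VertexWeights.ev at hc
  split_ifs at hc <;> first | exact absurd rfl hc | (subst_vars; omega)

theorem sum_le_eq {n : ℕ} (a : Fin n → ℤ) (j : Fin n) :
    ∑ j' with j' ≤ j, a j' = (∑ j' with j' < j, a j') + a j := by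
  classical
  have : (univ.filter fun j' => j' ≤ j) = insert j (univ.filter fun j' => j' < j) := by
    ext; simp [le_iff_lt_or_eq, or_comm]
  rw [this, sum_insert (by simp), add_comm]

/-- The partition function of alternating sign matrices, evaluated row by row. -/
theorem asmZ_eq_stackZ {n : ℕ} (f : Fin n → Fin n → VertexWeights R) :
    asmZ f = stackZ (List.ofFn fun i => List.ofFn (f i)) (List.replicate n 0) := by
  classical
  have hr : List.replicate n (0 : ℤ) = List.ofFn fun _ : Fin n => 0 := by simp
  rw [hr, stackZ_ofFn, asmZ]
  refine sum_congr rfl fun e _ => ?_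
  simp only [zero_add]
  by_cases he : IsASM (asmMat e)
  · rw [if_pos he, if_pos ⟨he.2.2.2.1, he.2.2.2.2⟩]
    rfl
  · rw [if_neg he]
    symm
    rw [ite_eq_right_iff]
    rintro ⟨h1, h2⟩
    by_contra h
    have h' := fun i j => VertexWeights.ev_ne_zero
      fun h0 => h (prod_eq_zero (mem_univ i) (prod_eq_zero (mem_univ j) h0))
    refine he ⟨?_, fun i j => ?_, fun i j => ?_, h1, h2⟩
    · intro i j
      simp only [asmMat]
      have := (e i j).is_lt
      omega
    · rw [sum_le_eq]; exact (h' i j).1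
    · rw [sum_le_eq fun i' => asmMat e i' j]; exact (h' i j).2

end Bridge

section Symmetry

variable {R : Type*} [CommRing R]

theorem sum_lt_add_eq {n : ℕ} (a : Fin n → ℤ) (j : Fin n) :
    (∑ j' with j' < j, a j') + a j + ∑ j' with j < j', a j' = ∑ j', a j' := by
  rw [← sum_le_eq, ← sum_filter_add_sum_filter_not univ (fun j' => j' ≤ j)]
  simp only [not_le]

theorem sum_lt_rev {n : ℕ} (a : Fin n → ℤ) (j : Fin n) :
    ∑ j' with j' < j, a j'.rev = ∑ j' with j.rev < j', a j' := by
  rw [sum_filter, sum_filter, ← Equiv.sum_comp Fin.revPerm]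
  simp [Fin.rev_lt_iff]

theorem sum_lt_mem {n : ℕ} {a : Fin n → ℤ}
    (ha : ∀ j, ∑ j' with j' ≤ j, a j' = 0 ∨ ∑ j' with j' ≤ j, a j' = 1) (j : Fin n) :
    ∑ j' with j' < j, a j' = 0 ∨ ∑ j' with j' < j, a j' = 1 := by
  cases n with
  | zero => exact j.elim0
  | succ n =>
    induction j using Fin.cases with
    | zero => simp
    | succ j => simpa only [Fin.lt_def, Fin.le_def, Fin.val_succ, Nat.lt_succ_iff,
        Fin.val_castSucc] using ha j.castSucc

theorem IsASM.row {n : ℕ} {A : Fin n → Fin n → ℤ} (hA : IsASM A) (i j : Fin n) :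
    (∑ j' with j' < j, A i j' = 0 ∨ ∑ j' with j' < j, A i j' = 1) ∧
      (∑ j' with j' < j, A i j' + A i j = 0 ∨ ∑ j' with j' < j, A i j' + A i j = 1) := by
  refine ⟨sum_lt_mem (hA.2.1 i) j, ?_⟩
  rw [← sum_le_eq]
  exact hA.2.1 i j

theorem IsASM.transpose {n : ℕ} {A : Fin n → Fin n → ℤ} (hA : IsASM A) :
    IsASM fun i j => A j i :=
  ⟨fun i j => hA.1 j i, fun i j => hA.2.2.1 j i, fun i j => hA.2.1 j i, hA.2.2.2.2, hA.2.2.2.1⟩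

theorem IsASM.col {n : ℕ} {A : Fin n → Fin n → ℤ} (hA : IsASM A) (i j : Fin n) :
    (∑ i' with i' < i, A i' j = 0 ∨ ∑ i' with i' < i, A i' j = 1) ∧
      (∑ i' with i' < i, A i' j + A i j = 0 ∨ ∑ i' with i' < i, A i' j + A i j = 1) :=
  hA.transpose.row j i

theorem IsASM.reflect {n : ℕ} {A : Fin n → Fin n → ℤ} (hA : IsASM A) :
    IsASM fun i j => A i j.rev := by
  refine ⟨fun i j => hA.1 i _, fun i j => ?_, fun i j => hA.2.2.1 i _, fun i => ?_,
    fun j => hA.2.2.2.2 _⟩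
  · have h1 := (hA.row i j.rev).1
    have h2 := sum_lt_add_eq (A i) j.rev
    have h3 := hA.2.2.2.1 i
    rw [sum_le_eq fun j => A i j.rev, sum_lt_rev]
    omega
  · rw [← hA.2.2.2.1 i, ← Equiv.sum_comp Fin.revPerm]
    simp

/-- The weights of the vertex reflected in the main diagonal. -/
def VertexWeights.swap (c : VertexWeights R) : VertexWeights R :=
  ⟨c.w00, c.w11, c.w10, c.w01, c.cp, c.cm⟩

/-- The weights of the vertex reflected in a vertical line. -/
def VertexWeights.reflect (c : VertexWeights R) : VertexWeights R :=
  ⟨c.w10, c.w01, c.w11, c.w00, c.cp, c.cm⟩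

theorem VertexWeights.ev_swap (c : VertexWeights R) (h k a : ℤ) :
    c.swap.ev h k a = c.ev k h a := by
  simp only [VertexWeights.ev, VertexWeights.swap]
  split_ifs <;> first | rfl | omega

theorem VertexWeights.ev_reflect (c : VertexWeights R) (h k a : ℤ) :
    c.reflect.ev (1 - h - a) k a = c.ev h k a := by
  simp only [VertexWeights.ev, VertexWeights.reflect]
  split_ifs <;> first | rfl | omega

theorem asmZ_swap {n : ℕ} (f : Fin n → Fin n → VertexWeights R) :
    asmZ (fun i j => (f j i).swap) = asmZ f := by
  classical
  rw [asmZ, ← (Equiv.piComm fun _ _ : Fin n => Fin 3).sum_comp]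
  refine sum_congr rfl fun e _ => ?_
  refine if_congr ⟨IsASM.transpose, IsASM.transpose⟩ ?_ rfl
  rw [prod_comm]
  simp only [VertexWeights.ev_swap]
  rfl

theorem asmZ_reflect {n : ℕ} (f : Fin n → Fin n → VertexWeights R) :
    asmZ (fun i j => (f i j.rev).reflect) = asmZ f := by
  classical
  rw [asmZ, ← (Equiv.piCongrRight fun _ : Fin n =>
    Fin.revPerm.arrowCongr (Equiv.refl (Fin 3))).sum_comp]
  refine sum_congr rfl fun e _ => ?_
  have he : asmMat ((Equiv.piCongrRight fun _ : Fin n =>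
    Fin.revPerm.arrowCongr (Equiv.refl (Fin 3))) e) = fun i j => asmMat e i j.rev := rfl
  rw [he]
  have hiff : IsASM (fun i j => asmMat e i j.rev) ↔ IsASM (asmMat e) :=
    ⟨fun h => by simpa using h.reflect, IsASM.reflect⟩
  by_cases h : IsASM (asmMat e)
  · rw [if_pos h, if_pos (hiff.2 h)]
    refine prod_congr rfl fun i _ => ?_
    rw [← Equiv.prod_comp Fin.revPerm]
    refine prod_congr rfl fun j _ => ?_
    simp only [Fin.revPerm_apply, Fin.rev_rev]
    rw [← VertexWeights.ev_reflect, sum_lt_rev, Fin.rev_rev]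
    congr 1
    have h2 := sum_lt_add_eq (asmMat e i) j
    have h3 := h.2.2.2.1 i
    omega
  · rw [if_neg h, if_neg fun h' => h (hiff.1 h')]

end Symmetry

section Corner

variable {R : Type*} [CommRing R] {n : ℕ} {f g : Fin (n + 1) → Fin (n + 1) → VertexWeights R}

theorem asmZ_corner (f : Fin (n + 1) → Fin (n + 1) → VertexWeights R) :
    asmZ f = (f 0 0).w00 * rowTransfer (List.ofFn fun j => f 0 j.succ) 0 (List.replicate n 0)
        (fun t => stackZ (List.ofFn fun i : Fin n => List.ofFn (f i.succ)) (0 :: t)) +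
      (f 0 0).cp * ((∏ j : Fin n, (f 0 j.succ).w10) * ((∏ i : Fin n, (f i.succ 0).w01) *
        asmZ fun i j : Fin n => f i.succ j.succ)) := by
  have := stackZ_corner (f 0 0) (List.ofFn fun j => f 0 j.succ)
    (List.ofFn fun i : Fin n => (f i.succ 0, List.ofFn fun j => f i.succ j.succ))
  simp only [List.map_ofFn, List.length_ofFn, List.prod_ofFn, Function.comp_def,
    ← List.ofFn_succ (f := f _),
    ← List.ofFn_succ (f := fun i => List.ofFn (f i))] at this
  rw [asmZ_eq_stackZ, asmZ_eq_stackZ, this]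

/-- Replacing the weights at the top left corner. -/
theorem asmZ_topLeft (h : ∀ i j, (i, j) ≠ (0, 0) → f i j = g i j) (hc : (f 0 0).cp = (g 0 0).cp) :
    (g 0 0).w00 * (asmZ f - (f 0 0).cp * ((∏ j : Fin n, (f 0 j.succ).w10) *
      ((∏ i : Fin n, (f i.succ 0).w01) * asmZ fun i j : Fin n => f i.succ j.succ))) =
    (f 0 0).w00 * (asmZ g - (f 0 0).cp * ((∏ j : Fin n, (f 0 j.succ).w10) *
      ((∏ i : Fin n, (f i.succ 0).w01) * asmZ fun i j : Fin n => f i.succ j.succ))) := by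
  have h1 : ∀ j : Fin n, f 0 j.succ = g 0 j.succ := fun j => h _ _ (by simp)
  have h2 : ∀ (i : Fin n) j, f i.succ j = g i.succ j := fun i j => h _ _ (by simp)
  have h3 : ∀ i : Fin n, f i.succ = g i.succ := fun i => funext (h2 i)
  rw [asmZ_corner f, asmZ_corner g]
  simp only [h1, h2, h3, hc]
  ring

/-- Replacing the weights at the top right corner. -/
theorem asmZ_topRight (h : ∀ i j, (i, j) ≠ (0, Fin.last n) → f i j = g i j)
    (hc : (f 0 (Fin.last n)).cp = (g 0 (Fin.last n)).cp) :
    (g 0 (Fin.last n)).w10 * (asmZ f - (f 0 (Fin.last n)).cp *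
      ((∏ j : Fin n, (f 0 j.castSucc).w00) * ((∏ i : Fin n, (f i.succ (Fin.last n)).w11) *
        asmZ fun i j : Fin n => f i.succ j.castSucc))) =
    (f 0 (Fin.last n)).w10 * (asmZ g - (f 0 (Fin.last n)).cp *
      ((∏ j : Fin n, (f 0 j.castSucc).w00) * ((∏ i : Fin n, (f i.succ (Fin.last n)).w11) *
        asmZ fun i j : Fin n => f i.succ j.castSucc))) := by
  have := asmZ_topLeft (f := fun i j => (f i j.rev).reflect) (g := fun i j => (g i j.rev).reflect)
    (fun i j hij => by
      rw [h i j.rev]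
      simpa [Fin.rev_eq_iff] using hij) (by simpa [VertexWeights.reflect] using hc)
  have hs : asmZ (fun i j : Fin n => (f i.succ j.succ.rev).reflect) =
      asmZ fun i j : Fin n => f i.succ j.castSucc := by
    rw [← asmZ_reflect]
    simp only [Fin.rev_succ, Fin.rev_rev]
    rfl
  rw [asmZ_reflect, asmZ_reflect, hs] at this
  simp only [VertexWeights.reflect, Fin.rev_zero, Fin.rev_succ] at this
  rwa [show ∏ j : Fin n, (f 0 j.rev.castSucc).w00 = ∏ j : Fin n, (f 0 j.castSucc).w00 from
    Equiv.prod_comp Fin.revPerm fun j : Fin n => (f 0 j.castSucc).w00] at this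

/-- Replacing the weights at the bottom left corner. -/
theorem asmZ_bottomLeft (h : ∀ i j, (i, j) ≠ (Fin.last n, 0) → f i j = g i j)
    (hc : (f (Fin.last n) 0).cp = (g (Fin.last n) 0).cp) :
    (g (Fin.last n) 0).w01 * (asmZ f - (f (Fin.last n) 0).cp *
      ((∏ i : Fin n, (f i.castSucc 0).w00) * ((∏ j : Fin n, (f (Fin.last n) j.succ).w11) *
        asmZ fun i j : Fin n => f i.castSucc j.succ))) =
    (f (Fin.last n) 0).w01 * (asmZ g - (f (Fin.last n) 0).cp *
      ((∏ i : Fin n, (f i.castSucc 0).w00) * ((∏ j : Fin n, (f (Fin.last n) j.succ).w11) *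
        asmZ fun i j : Fin n => f i.castSucc j.succ))) := by
  have := asmZ_topRight (f := fun i j => (f j i).swap) (g := fun i j => (g j i).swap)
    (fun i j hij => by
      rw [h j i]
      simpa [and_comm] using hij) (by simpa [VertexWeights.swap] using hc)
  rwa [asmZ_swap f, asmZ_swap g, asmZ_swap fun i j : Fin n => f i.castSucc j.succ] at this

/-- Replacing the weights at the bottom right corner. -/
theorem asmZ_bottomRight (h : ∀ i j, (i, j) ≠ (Fin.last n, Fin.last n) → f i j = g i j)
    (hc : (f (Fin.last n) (Fin.last n)).cp = (g (Fin.last n) (Fin.last n)).cp) :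
    (g (Fin.last n) (Fin.last n)).w11 * (asmZ f - (f (Fin.last n) (Fin.last n)).cp *
      ((∏ i : Fin n, (f i.castSucc (Fin.last n)).w10) *
        ((∏ j : Fin n, (f (Fin.last n) j.castSucc).w01) *
        asmZ fun i j : Fin n => f i.castSucc j.castSucc))) =
    (f (Fin.last n) (Fin.last n)).w11 * (asmZ g - (f (Fin.last n) (Fin.last n)).cp *
      ((∏ i : Fin n, (f i.castSucc (Fin.last n)).w10) *
        ((∏ j : Fin n, (f (Fin.last n) j.castSucc).w01) *
        asmZ fun i j : Fin n => f i.castSucc j.castSucc))) := by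
  have := asmZ_bottomLeft (f := fun i j => (f i j.rev).reflect)
    (g := fun i j => (g i j.rev).reflect)
    (fun i j hij => by
      rw [h i j.rev]
      simpa [Fin.rev_eq_iff] using hij) (by simpa [VertexWeights.reflect] using hc)
  have hs : asmZ (fun i j : Fin n => (f i.castSucc j.succ.rev).reflect) =
      asmZ fun i j : Fin n => f i.castSucc j.castSucc := by
    rw [← asmZ_reflect]
    simp only [Fin.rev_succ, Fin.rev_rev]
    rfl
  rw [asmZ_reflect, asmZ_reflect, hs] at this
  simp only [VertexWeights.reflect, Fin.rev_zero, Fin.rev_succ] at this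
  rwa [show ∏ j : Fin n, (f (Fin.last n) j.rev.castSucc).w01 =
    ∏ j : Fin n, (f (Fin.last n) j.castSucc).w01 from
    Equiv.prod_comp Fin.revPerm fun j : Fin n => (f (Fin.last n) j.castSucc).w01] at this

end Corner

section Statistics

variable {R : Type*} [CommRing R]

/-- A nonnegative integer vector with sum `1`, seen from one of its zero entries. -/
theorem sum_lt_of_eq_zero {n : ℕ} {a : Fin n → ℤ} (h0 : ∀ j, 0 ≤ a j) (h1 : ∑ j, a j = 1)
    {j : Fin n} (hj : a j = 0) :
    ((∑ j' with j' < j, a j' = 0) ↔ ∃ j', j < j' ∧ a j' = 1) ∧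
      ((∑ j' with j' < j, a j' = 1) ↔ ∃ j', j' < j ∧ a j' = 1) := by
  obtain ⟨l, hl⟩ : ∃ l, a l ≠ 0 := by
    by_contra! h
    simp [h] at h1
  have hl1 : a l = 1 := by
    have := single_le_sum (fun i _ => h0 i) (mem_univ l)
    have := h0 l
    omega
  have hne : ∀ i, i ≠ l → a i = 0 := fun i hi => by
    have := add_le_sum (fun i _ => h0 i) (mem_univ i) (mem_univ l) hi
    have := h0 i
    omega
  have ha : a = fun i => if i = l then 1 else 0 := by
    ext i
    split_ifs with h
    · rw [h, hl1]
    · exact hne i h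
  have hjl : j ≠ l := by rintro rfl; exact hl hj
  subst ha
  simp only [sum_ite_eq', mem_filter, mem_univ, true_and, ite_eq_right_iff, one_ne_zero, imp_false,
    not_lt, ite_eq_left_iff, zero_ne_one, not_not, exists_eq_right]
  exact ⟨⟨fun h => lt_of_le_of_ne h hjl, le_of_lt⟩, not_le⟩

variable {n : ℕ} {A : Fin (n + 1) → Fin (n + 1) → ℤ}

theorem sum_lt_last_add (a : Fin (n + 1) → ℤ) :
    ∑ j' with j' < Fin.last n, a j' + a (Fin.last n) = ∑ j, a j := by
  rw [← sum_lt_add_eq a (Fin.last n)]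
  simp [Fin.lt_def, show ∀ j : Fin (n + 1), ¬ n < j from fun j => by omega]

theorem IsASM.firstRow_nonneg (hA : IsASM A) (j : Fin (n + 1)) : 0 ≤ A 0 j := by
  have h := (hA.col 0 j).2
  rw [sum_lt_zero] at h
  omega

theorem IsASM.lastRow_nonneg (hA : IsASM A) (j : Fin (n + 1)) : 0 ≤ A (Fin.last n) j := by
  have h := (hA.col (Fin.last n) j).1
  have h' := sum_lt_last_add fun i => A i j
  rw [hA.2.2.2.2] at h'
  omega

theorem IsASM.rhoT_eq (hA : IsASM A) : rhoT A = #{j | A 0 j = 0 ∧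
    ∑ j' with j' < j, A 0 j' = ∑ i' with i' < 0, A i' j} := by
  refine congrArg card (filter_congr fun j _ => and_congr_right fun h => ?_)
  rw [sum_lt_zero, (sum_lt_of_eq_zero hA.firstRow_nonneg (hA.2.2.2.1 0) h).1]
  rfl

theorem IsASM.rhoB_eq (hA : IsASM A) : rhoB A = #{j | A (Fin.last n) j = 0 ∧
    ∑ j' with j' < j, A (Fin.last n) j' = ∑ i' with i' < Fin.last n, A i' j} := by
  refine congrArg card (filter_congr fun j _ => and_congr_right fun h => ?_)
  have h' := sum_lt_last_add fun i => A i j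
  rw [hA.2.2.2.2, show A (Fin.last n) j = 0 from h, add_zero] at h'
  rw [h', (sum_lt_of_eq_zero hA.lastRow_nonneg (hA.2.2.2.1 _) h).2]
  rfl

theorem IsASM.rhoL_eq (hA : IsASM A) : rhoL A = #{i | A i 0 = 0 ∧
    ∑ j' with j' < 0, A i j' = ∑ i' with i' < i, A i' 0} := by
  simp only [@eq_comm _ (∑ j' with j' < (0 : Fin (n + 1)), _)]
  exact hA.transpose.rhoT_eq

theorem IsASM.rhoR_eq (hA : IsASM A) : rhoR A = #{i | A i (Fin.last n) = 0 ∧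
    ∑ j' with j' < Fin.last n, A i j' = ∑ i' with i' < i, A i' (Fin.last n)} := by
  simp only [@eq_comm _ (∑ j' with j' < Fin.last n, _)]
  exact hA.transpose.rhoB_eq

theorem IsASM.nuASM_eq {n : ℕ} {A : Fin n → Fin n → ℤ} (hA : IsASM A) :
    nuASM A = #{p : Fin n × Fin n | A p.1 p.2 = 0 ∧ ∑ j' with j' < p.2, A p.1 j' = 1 ∧
      ∑ i' with i' < p.1, A i' p.2 = 1} := by
  have h : (∑ i : Fin n, ∑ i' : Fin n, ∑ j : Fin n, ∑ j' : Fin n,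
      if i < i' ∧ j' ≤ j then A i j * A i' j' else 0) = ∑ i' : Fin n, ∑ j : Fin n,
      (∑ i with i < i', A i j) * (∑ j' with j' < j, A i' j' + A i' j) := by
    rw [sum_comm]
    refine sum_congr rfl fun i' _ => ?_
    rw [sum_comm]
    refine sum_congr rfl fun j _ => ?_
    rw [← sum_le_eq, sum_filter, sum_filter, sum_mul_sum]
    refine sum_congr rfl fun i _ => sum_congr rfl fun j' _ => ?_
    split_ifs <;> simp_all
  rw [nuASM, h, ← Int.toNat_natCast (#_), card_filter, Nat.cast_sum, Fintype.sum_prod_type]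
  congr 1
  refine sum_congr rfl fun i _ => sum_congr rfl fun j _ => ?_
  obtain ⟨h1, h2⟩ := hA.row i j
  obtain ⟨h3, h4⟩ := hA.col i j
  obtain h5 := hA.1 i j
  generalize ∑ j' with j' < j, A i j' = h at *
  generalize ∑ i' with i' < i, A i' j = k at *
  generalize A i j = a at *
  clear * - h1 h2 h3 h4 h5
  rcases h1 with rfl | rfl <;> rcases h3 with rfl | rfl <;> rcases h5 with rfl | rfl | rfl <;>
    simp at *

theorem prod_ite_eq_pow {ι : Type*} [Fintype ι] (p : ι → Prop) [DecidablePred p] (z : R) :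
    ∏ j, (if p j then z else 1) = z ^ #{j | p j} := by
  simp [prod_ite]

/-- The vector `(z, 1, …, 1, z')`. -/
def edgeVec (n : ℕ) (z z' : R) (i : Fin (n + 1)) : R :=
  (if i = 0 then z else 1) * (if i = Fin.last n then z' else 1)

/-- The weights under which the partition function is the quadruply-refined generating function;
the weight of `-1` is irrelevant on the boundary. -/
structure IsRefined (x y z1 z2 z3 z4 : R) (f : Fin (n + 1) → Fin (n + 1) → VertexWeights R) :
    Prop where
  w00 : ∀ i j, (f i j).w00 = y * (edgeVec n z1 z3 i * edgeVec n z4 z2 j)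
  w11 : ∀ i j, (f i j).w11 = x * (y * (edgeVec n z1 z3 i * edgeVec n z4 z2 j))
  w01 : ∀ i j, (f i j).w01 = y
  w10 : ∀ i j, (f i j).w10 = y
  cp : ∀ i j, (f i j).cp = y
  cm : ∀ i j, i ≠ 0 → i ≠ Fin.last n → j ≠ 0 → j ≠ Fin.last n → (f i j).cm = y * y

theorem IsRefined.ev_eq {x y z1 z2 z3 z4 : R} {f : Fin (n + 1) → Fin (n + 1) → VertexWeights R}
    (hf : IsRefined x y z1 z2 z3 z4 f) (hA : IsASM A) (i j : Fin (n + 1)) :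
    (f i j).ev (∑ j' with j' < j, A i j') (∑ i' with i' < i, A i' j) (A i j) =
      y * ((if A i j = 0 ∧ ∑ j' with j' < j, A i j' = 1 ∧ ∑ i' with i' < i, A i' j = 1
        then x else 1) * (if A i j = -1 then y else 1) *
      (if A i j = 0 ∧ ∑ j' with j' < j, A i j' = ∑ i' with i' < i, A i' j
        then edgeVec n z1 z3 i * edgeVec n z4 z2 j else 1)) := by
  have hcm : A i j = -1 → (f i j).cm = y * y := by
    intro h
    refine hf.cm i j ?_ ?_ ?_ ?_ <;> rintro rfl
    · have := hA.firstRow_nonneg j; omega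
    · have := hA.lastRow_nonneg j; omega
    · have := hA.transpose.firstRow_nonneg i; omega
    · have := hA.transpose.lastRow_nonneg i; omega
  obtain ⟨h1, h2⟩ := hA.row i j
  obtain ⟨h3, h4⟩ := hA.col i j
  obtain h5 := hA.1 i j
  generalize ∑ j' with j' < j, A i j' = h at *
  generalize ∑ i' with i' < i, A i' j = k at *
  generalize A i j = a at *
  rcases h1 with rfl | rfl <;> rcases h3 with rfl | rfl <;> rcases h5 with rfl | rfl | rfl <;>
    simp [VertexWeights.ev, hf.w00, hf.w11, hf.w01, hf.w10, hf.cp] at * <;>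
    first | exact hcm | ring

theorem prod_prod_edge (p : Fin (n + 1) → Fin (n + 1) → Prop) [∀ i j, Decidable (p i j)] (l) (z : R) :
    ∏ i, ∏ j, (if p i j then if i = l then z else 1 else 1) = z ^ #{j | p l j} := by
  rw [Fintype.prod_eq_single l fun i hi => by simp [hi]]
  simp [prod_ite]

theorem prod_edgeVec (p : Fin (n + 1) → Fin (n + 1) → Prop) [∀ i j, Decidable (p i j)]
    (z1 z2 z3 z4 : R) :
    ∏ i, ∏ j, (if p i j then edgeVec n z1 z3 i * edgeVec n z4 z2 j else 1) =
      z1 ^ #{j | p 0 j} * z3 ^ #{j | p (Fin.last n) j} *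
        (z4 ^ #{i | p i 0} * z2 ^ #{i | p i (Fin.last n)}) := by
  simp only [← prod_prod_edge p, ← prod_prod_edge fun i j => p j i]
  rw [prod_comm (f := fun i j => if p j i then if i = 0 then z4 else 1 else 1),
    prod_comm (f := fun i j => if p j i then if i = Fin.last n then z2 else 1 else 1)]
  simp only [← prod_mul_distrib]
  refine prod_congr rfl fun i _ => prod_congr rfl fun j _ => ?_
  by_cases h : p i j <;> simp [h, edgeVec]

theorem IsRefined.asmZ_eq {x y z1 z2 z3 z4 : R} {f : Fin (n + 1) → Fin (n + 1) → VertexWeights R}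
    (hf : IsRefined x y z1 z2 z3 z4 f) :
    asmZ f = y ^ ((n + 1) * (n + 1)) * Zqua (n + 1) x y z1 z2 z3 z4 := by
  classical
  rw [asmZ, Zqua, mul_sum]
  refine sum_congr rfl fun e _ => ?_
  split_ifs with hA
  swap
  · rw [mul_zero]
  simp only [hf.ev_eq hA, prod_mul_distrib, prod_edgeVec, hA.rhoT_eq, hA.rhoB_eq, hA.rhoL_eq,
    hA.rhoR_eq, hA.nuASM_eq, muASM]
  simp only [← prod_ite_eq_pow, Fintype.prod_prod_type, prod_const, card_univ, Fintype.card_fin,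
    ← pow_mul]
  ring

end Statistics

section CornerFormulas

variable {R : Type*} [CommRing R]

theorem edgeVec_zero (n : ℕ) (z z' : R) : edgeVec (n + 1) z z' 0 = z := by
  simp [edgeVec, (Fin.last_pos (n := n)).ne]

theorem edgeVec_last (n : ℕ) (z z' : R) : edgeVec (n + 1) z z' (Fin.last _) = z' := by
  simp [edgeVec]

theorem edgeVec_succ {n : ℕ} (z z' : R) (i : Fin (n + 1)) :
    edgeVec (n + 1) z z' i.succ = edgeVec n 1 z' i := by
  simp [edgeVec, ← Fin.succ_last]

theorem edgeVec_castSucc {n : ℕ} (z z' : R) (i : Fin (n + 1)) :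
    edgeVec (n + 1) z z' i.castSucc = edgeVec n z 1 i := by
  simp [edgeVec]

theorem edgeVec_one_castSucc {n : ℕ} (z : R) (i : Fin n) : edgeVec n 1 z i.castSucc = 1 := by
  simp [edgeVec]

theorem edgeVec_one_last {n : ℕ} (z : R) : edgeVec n 1 z (Fin.last n) = z := by
  simp [edgeVec]

theorem edgeVec_succ_one {n : ℕ} (z : R) (i : Fin n) : edgeVec n z 1 i.succ = 1 := by
  simp [edgeVec]

theorem edgeVec_zero_one {n : ℕ} (z : R) : edgeVec n z 1 0 = z := by
  simp [edgeVec]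

theorem edgeVec_one_one {n : ℕ} : edgeVec n (1 : R) 1 = fun _ => 1 := by
  ext; simp [edgeVec]

theorem edgeVec_eq_one {n : ℕ} (z z' : R) {i : Fin (n + 1)} (h0 : i ≠ 0) (h1 : i ≠ Fin.last n) :
    edgeVec n z z' i = 1 := by
  simp [edgeVec, h0, h1]

/-- The integrable weights of a site with `u = 1` or `v = 1`, as functions of `u` and `v`. -/
def refinedVertex (x y u v : R) : VertexWeights R :=
  ⟨y * (u * v), x * (y * (u * v)), y, y, y, y * y⟩

/-- The integrable weights, replaced by those of the refined generating function on `s`. -/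
def mixedWeights {n : ℕ} (x y : R) (s : Finset (Fin n × Fin n)) (u v : Fin n → R) (i j : Fin n) :
    VertexWeights R :=
  if (i, j) ∈ s then refinedVertex x y (u i) (v j) else sixVertex x y (u i) (v j)

theorem sixVertexZ_eq_asmZ {n : ℕ} (x y : R) (u v : Fin n → R) :
    sixVertexZ x y u v = asmZ (mixedWeights x y ∅ u v) := by
  rw [asmZ_eq_stackZ]
  rfl

theorem isRefined_mixedWeights {n : ℕ} {x y z1 z2 z3 z4 : R} {s : Finset (Fin (n + 1) × Fin (n + 1))}
    (hs : ∀ i j, (i, j) ∈ s ∨ edgeVec n z1 z3 i = 1 ∨ edgeVec n z4 z2 j = 1) :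
    IsRefined x y z1 z2 z3 z4 (mixedWeights x y s (edgeVec n z1 z3) (edgeVec n z4 z2)) := by
  refine ⟨fun i j => ?_, fun i j => ?_, fun i j => ?_, fun i j => ?_, fun i j => ?_,
    fun i j h1 h2 h3 h4 => ?_⟩
  rotate_right
  · by_cases h : (i, j) ∈ s
    · simp [mixedWeights, h, refinedVertex]
    · simp [mixedWeights, h, sixVertex, edgeVec_eq_one, h1, h2, h3, h4]
      ring
  all_goals
    by_cases h : (i, j) ∈ s
    · simp [mixedWeights, h, refinedVertex]
    · rcases (hs i j).resolve_left h with h' | h' <;> simp [mixedWeights, h, h', sixVertex]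

theorem sixVertexZ_one (n : ℕ) (x y : R) :
    sixVertexZ x y (edgeVec n 1 1) (edgeVec n 1 1) =
      y ^ ((n + 1) * (n + 1)) * Zun (n + 1) x y := by
  rw [sixVertexZ_eq_asmZ, Zun,
    (isRefined_mixedWeights fun i j => by simp [edgeVec_one_one]).asmZ_eq]

/-- Replacing the four corner weights one after the other connects the integrable partition
function to the quadruply-refined generating function. -/
theorem exists_corner_chain (n : ℕ) (x y z1 z2 z3 z4 : R) : ∃ M1 M2 M3 : R,
    (∀ F, F = y * (y ^ n * (y - x * (z1 - 1) * (z2 - 1)) * (y ^ n * (y - x * (z3 - 1) * (z4 - 1)) *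
        sixVertexZ x y (edgeVec n 1 z3) (edgeVec n 1 z2))) →
      y * (z1 * z4) * (sixVertexZ x y (edgeVec (n + 1) z1 z3) (edgeVec (n + 1) z4 z2) - F) =
        (y * z1 * z4 - (z1 - 1) * (z4 - 1)) * (M1 - F)) ∧
    (∀ F, F = y * (y * (z1 * z4) * (y * z1) ^ n *
        ((x * (y * z2)) ^ n * (x * (y * z3 * z2 - (z3 - 1) * (z2 - 1))) *
        sixVertexZ x y (edgeVec n 1 z3) (edgeVec n z4 1))) →
      y * (M1 - F) = (y - x * (z1 - 1) * (z2 - 1)) * (M2 - F)) ∧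
    (∀ F, F = y * (y * (z1 * z4) * (y * z4) ^ n *
        ((x * (y * z3)) ^ n * (x * (y * z3 * z2 - (z3 - 1) * (z2 - 1))) *
        (y ^ ((n + 1) * (n + 1)) * Zqua (n + 1) x y z1 z2 1 1))) →
      y * (M2 - F) = (y - x * (z3 - 1) * (z4 - 1)) * (M3 - F)) ∧
    (∀ F, F = y * (y ^ (n + 1) * (y ^ (n + 1) *
        (y ^ ((n + 1) * (n + 1)) * Zqua (n + 1) x y z1 1 1 z4))) →
      x * (y * (z3 * z2)) * (M3 - F) = x * (y * z3 * z2 - (z3 - 1) * (z2 - 1)) *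
        (y ^ ((n + 2) * (n + 2)) * Zqua (n + 2) x y z1 z2 z3 z4 - F)) := by
  let u := edgeVec (n + 1) z1 z3
  let v := edgeVec (n + 1) z4 z2
  let f := fun s => mixedWeights x y s u v
  have hcp : ∀ s t i j, (f s i j).cp = (f t i j).cp := fun s t i j => by
    simp only [f, mixedWeights]
    split_ifs <;> rfl
  let s1 : Finset (Fin (n + 2) × Fin (n + 2)) := {(0, 0)}
  let s2 := insert (0, Fin.last (n + 1)) s1
  let s3 := insert (Fin.last (n + 1), 0) s2
  let s4 := insert (Fin.last (n + 1), Fin.last (n + 1)) s3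
  have h0 : ∀ s p, ∀ i j, (i, j) ≠ p → f s i j = f (insert p s) i j := fun s p i j hij => by
    simp [f, mixedWeights, hij]
  have c1 := asmZ_topLeft (h0 ∅ (0, 0)) (hcp _ _ _ _)
  have c2 := asmZ_topRight (h0 s1 (0, Fin.last _)) (hcp _ _ _ _)
  have c3 := asmZ_bottomLeft (h0 s2 (Fin.last _, 0)) (hcp _ _ _ _)
  have c4 := asmZ_bottomRight (h0 s3 (Fin.last _, Fin.last _)) (hcp _ _ _ _)
  have e1 : asmZ (fun i j : Fin (n + 1) => f ∅ i.succ j.succ) =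
      sixVertexZ x y (edgeVec n 1 z3) (edgeVec n 1 z2) := by
    rw [sixVertexZ_eq_asmZ]
    simp only [f, mixedWeights, u, v, edgeVec_succ]
    rfl
  have e2 : asmZ (fun i j : Fin (n + 1) => f s1 i.succ j.castSucc) =
      sixVertexZ x y (edgeVec n 1 z3) (edgeVec n z4 1) := by
    rw [sixVertexZ_eq_asmZ]
    refine congrArg asmZ (funext fun i => funext fun j => ?_)
    simp [f, mixedWeights, u, v, edgeVec_succ, edgeVec_castSucc, s1]
  have e3 : asmZ (fun i j : Fin (n + 1) => f s2 i.castSucc j.succ) =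
      y ^ ((n + 1) * (n + 1)) * Zqua (n + 1) x y z1 z2 1 1 := by
    have hs : IsRefined x y z1 z2 1 1
        (mixedWeights x y {(0, Fin.last n)} (edgeVec n z1 1) (edgeVec n 1 z2)) :=
      isRefined_mixedWeights fun i j => by
        induction i using Fin.cases <;> induction j using Fin.lastCases <;>
          simp [edgeVec_succ_one, edgeVec_one_castSucc]
    rw [← hs.asmZ_eq]
    refine congrArg asmZ (funext fun i => funext fun j => ?_)
    simp [f, mixedWeights, u, v, edgeVec_succ, edgeVec_castSucc, s2, s1]
  have e4 : asmZ (fun i j : Fin (n + 1) => f s3 i.castSucc j.castSucc) =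
      y ^ ((n + 1) * (n + 1)) * Zqua (n + 1) x y z1 1 1 z4 := by
    have hs : IsRefined x y z1 1 1 z4
        (mixedWeights x y {(0, 0)} (edgeVec n z1 1) (edgeVec n z4 1)) :=
      isRefined_mixedWeights fun i j => by
        induction i using Fin.cases <;> induction j using Fin.cases <;> simp [edgeVec_succ_one]
    rw [← hs.asmZ_eq]
    refine congrArg asmZ (funext fun i => funext fun j => ?_)
    simp [f, mixedWeights, u, v, edgeVec_castSucc, s3, s2, s1]
  have e5 : asmZ (f s4) = y ^ ((n + 2) * (n + 2)) * Zqua (n + 2) x y z1 z2 z3 z4 := by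
    refine (isRefined_mixedWeights fun i j => ?_).asmZ_eq
    by_cases hi : i = 0 ∨ i = Fin.last _ <;> by_cases hj : j = 0 ∨ j = Fin.last _
    · left
      rcases hi with rfl | rfl <;> rcases hj with rfl | rfl <;> simp [s4, s3, s2, s1]
    all_goals
      simp only [not_or] at hi hj
      simp [edgeVec_eq_one, *]
  have hf0 : asmZ (f ∅) = sixVertexZ x y u v := (sixVertexZ_eq_asmZ x y u v).symm
  have hl : (0 : Fin (n + 2)) ≠ Fin.last (n + 1) := (Fin.last_pos).ne
  rw [e1, hf0, Fin.prod_univ_castSucc, Fin.prod_univ_castSucc] at c1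
  rw [e2, Fin.prod_univ_succ, Fin.prod_univ_castSucc] at c2
  rw [e3, Fin.prod_univ_succ, Fin.prod_univ_castSucc] at c3
  rw [e4, Fin.prod_univ_succ, Fin.prod_univ_succ, show insert _ s3 = s4 from rfl, e5] at c4
  refine ⟨asmZ (f s1), asmZ (f s2), asmZ (f s3), ?_, ?_, ?_, ?_⟩
  · rintro F rfl
    simp [f, mixedWeights, refinedVertex, sixVertex, u, v, s1, edgeVec_zero, edgeVec_succ,
      edgeVec_one_castSucc, edgeVec_last] at c1 ⊢
    linear_combination c1
  · rintro F rfl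
    simpa [f, mixedWeights, refinedVertex, sixVertex, u, v, s1, s2, edgeVec_zero, edgeVec_succ,
      edgeVec_one_castSucc, edgeVec_one_last, edgeVec_castSucc, edgeVec_last, edgeVec_zero_one,
      edgeVec_succ_one, hl] using c2
  · rintro F rfl
    simpa [f, mixedWeights, refinedVertex, sixVertex, u, v, s1, s2, s3, edgeVec_zero, edgeVec_succ,
      edgeVec_one_castSucc, edgeVec_one_last, edgeVec_castSucc, edgeVec_last, edgeVec_zero_one,
      edgeVec_succ_one, hl, hl.symm] using c3
  · rintro F rfl
    simp [f, mixedWeights, refinedVertex, sixVertex, u, v, s1, s2, s3, s4, edgeVec_zero,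
      edgeVec_succ, edgeVec_one_castSucc, edgeVec_last, hl, hl.symm] at c4 ⊢
    linear_combination c4

end CornerFormulas

section Elimination

theorem refined_relation_of_chain {R : Type*} [CommRing R]
    {x y a b s t D a12 a34 a14 a23 b12 b34 b14 b23 f12 f34 e14 e23 U Q Qss Qcc Qsc Qcs Zss Zcc Zsc
      Zcs η0 η1 η2 η3 : R}
    (h1 : a12 * a34 = a14 * a23 + y * D) (h2 : b14 * b23 = b12 * b34 - x * (y * D))
    (h3 : f12 * f34 = e14 * e23)
    (hss : y * b * Zss = a23 * Qss + e23 * U) (hcc : y * a * Zcc = a14 * Qcc + e14 * U)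
    (hsc : y * Zsc = b34 * Qsc + x * f34 * t * U) (hcs : y * Zcs = b12 * Qcs + x * f12 * s * U)
    (hη0 : y * a * η0 = a14 * η1 + e14 * (b12 * b34 * Zss))
    (hη1 : y * η1 = b12 * η2 + x * f12 * (y * a * x * a23 * s * Zsc))
    (hη2 : y * η2 = b34 * η3 + x * f34 * (y * a * x * a23 * t * Qcs))
    (hη3 : y * b * η3 = a23 * (y ^ 2 * Q) + e23 * (y ^ 2 * Qcc))
    (hquad : y * D * η0 * U =
      a12 * b12 * (a34 * b34) * Zss * Zcc - a14 * b14 * (a23 * b23) * Zsc * Zcs) :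
    y ^ 2 * (a14 * a23 * b12 * b34) * (y * D * Q * U) =
      y ^ 2 * (a14 * a23 * b12 * b34) * (a12 * a34 * Qcc * Qss - b14 * b23 * (a * b) * Qcs * Qsc +
        e23 * a14 * Qcc * U - f34 * b12 * (x * a * b * t) * Qcs * U + e14 * a23 * Qss * U -
        f12 * b34 * (x * a * b * s) * Qsc * U + e14 * e23 * (1 - x ^ 2 * a * b * s * t) * U ^ 2) := by
  linear_combination (exp := 1) y ^ 4 * a * b * hquad - y * D * U * (y ^ 3 * b * hη0 +
      y ^ 2 * b * a14 * hη1 + y * b * a14 * b12 * hη2 + a14 * b12 * b34 * hη3 +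
      y ^ 2 * e14 * b12 * b34 * hss + y ^ 2 * b * a14 * x * f12 * a * x * a23 * s * hsc) +
    y ^ 2 * a12 * a34 * b12 * b34 * (y * a * Zcc * hss + (a23 * Qss + e23 * U) * hcc) -
    y ^ 2 * a * b * a14 * a23 * b14 * b23 * (y * Zcs * hsc + (b34 * Qsc + x * f34 * t * U) * hcs) +
    y ^ 2 * b12 * b34 * ((a23 * Qss + e23 * U) * (a14 * Qcc + e14 * U) - a14 * a23 * Qss * Qcc) * h1 -
    y ^ 2 * a * b * a14 * a23 * ((b34 * Qsc + x * f34 * t * U) * (b12 * Qcs + x * f12 * s * U) -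
      b12 * b34 * Qsc * Qcs) * h2 - y ^ 2 * a * b * a14 * a23 * b12 * b34 * x ^ 2 * s * t * U ^ 2 * h3

end Elimination

section Symmetries

theorem IsASM.rotate {n : ℕ} {A : Fin n → Fin n → ℤ} (hA : IsASM A) :
    IsASM fun i j => A i.rev j.rev :=
  hA.reflect.transpose.reflect.transpose

theorem nuASM_transpose {n : ℕ} {A : Fin n → Fin n → ℤ} (hA : IsASM A) :
    nuASM (fun i j => A j i) = nuASM A := by
  rw [hA.nuASM_eq, hA.transpose.nuASM_eq]
  refine card_equiv (Equiv.prodComm _ _) fun p => ?_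
  simp only [mem_filter, mem_univ, true_and, Equiv.prodComm_apply, Prod.fst_swap, Prod.snd_swap]
  rw [and_comm (b := _ = (1 : ℤ))]

theorem muASM_transpose {n : ℕ} (A : Fin n → Fin n → ℤ) :
    muASM (fun i j => A j i) = muASM A :=
  card_equiv (Equiv.prodComm _ _) fun p => by simp

theorem nuASM_rotate {n : ℕ} (A : Fin n → Fin n → ℤ) :
    nuASM (fun i j => A i.rev j.rev) = nuASM A := by
  refine congrArg Int.toNat ?_
  rw [← Equiv.sum_comp Fin.revPerm, sum_comm, ← Equiv.sum_comp Fin.revPerm]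
  refine sum_congr rfl fun i _ => sum_congr rfl fun i' _ => ?_
  rw [← Equiv.sum_comp Fin.revPerm, sum_comm, ← Equiv.sum_comp Fin.revPerm]
  refine sum_congr rfl fun j _ => sum_congr rfl fun j' _ => ?_
  simp [Fin.rev_lt_rev, Fin.rev_le_rev, mul_comm]

theorem muASM_rotate {n : ℕ} (A : Fin n → Fin n → ℤ) :
    muASM (fun i j => A i.rev j.rev) = muASM A :=
  card_equiv (Equiv.prodCongr Fin.revPerm Fin.revPerm) fun p => by simp

theorem rhoT_rotate {n : ℕ} (A : Fin n → Fin n → ℤ) :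
    rhoT (fun i j => A i.rev j.rev) = rhoB A := by
  refine card_equiv Fin.revPerm fun j => ?_
  have h : (⟨0, j.pos⟩ : Fin n).rev = ⟨n - 1, Nat.sub_lt j.pos Nat.one_pos⟩ := Fin.ext (by simp)
  simp only [mem_filter, mem_univ, true_and, h]
  rw [← Fin.revPerm.exists_congr_right]
  simp [Fin.lt_rev_iff]

theorem rhoB_rotate {n : ℕ} (A : Fin n → Fin n → ℤ) :
    rhoB (fun i j => A i.rev j.rev) = rhoT A := by
  simpa using (rhoT_rotate fun i j => A i.rev j.rev).symm

theorem rhoL_rotate {n : ℕ} (A : Fin n → Fin n → ℤ) :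
    rhoL (fun i j => A i.rev j.rev) = rhoR A :=
  rhoT_rotate fun i j => A j i

theorem rhoR_rotate {n : ℕ} (A : Fin n → Fin n → ℤ) :
    rhoR (fun i j => A i.rev j.rev) = rhoL A :=
  rhoB_rotate fun i j => A j i

variable {R S : Type*} [CommRing R] [CommRing S]

theorem Zqua_transpose (n : ℕ) (x y z1 z2 z3 z4 : R) :
    Zqua n x y z1 z2 z3 z4 = Zqua n x y z4 z3 z2 z1 := by
  classical
  rw [Zqua, Zqua, ← (Equiv.piComm fun _ _ : Fin n => Fin 3).sum_comp]
  refine sum_congr rfl fun e _ => ?_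
  have he : asmMat (Equiv.piComm (fun _ _ : Fin n => Fin 3) e) = fun i j => asmMat e j i := rfl
  rw [he]
  refine if_ctx_congr ⟨IsASM.transpose, IsASM.transpose⟩ (fun hA => ?_) fun _ => rfl
  rw [nuASM_transpose hA, muASM_transpose]
  change _ * _ * z1 ^ rhoL (asmMat e) * z2 ^ rhoB (asmMat e) * z3 ^ rhoR (asmMat e) *
    z4 ^ rhoT (asmMat e) = _
  ring

theorem Zqua_rotate (n : ℕ) (x y z1 z2 z3 z4 : R) :
    Zqua n x y z1 z2 z3 z4 = Zqua n x y z3 z4 z1 z2 := by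
  classical
  rw [Zqua, Zqua, ← (Fin.revPerm.arrowCongr
    (Fin.revPerm.arrowCongr (Equiv.refl (Fin 3)))).sum_comp]
  refine sum_congr rfl fun e _ => ?_
  have he : asmMat (Fin.revPerm.arrowCongr (Fin.revPerm.arrowCongr (Equiv.refl (Fin 3))) e) =
    fun i j : Fin n => asmMat e i.rev j.rev := rfl
  rw [he, nuASM_rotate, muASM_rotate, rhoT_rotate, rhoB_rotate, rhoL_rotate, rhoR_rotate]
  refine if_congr ⟨fun h => by simpa using h.rotate, IsASM.rotate⟩ ?_ rfl
  ring

theorem map_Zqua (f : R →+* S) (n : ℕ) (x y z1 z2 z3 z4 : R) :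
    f (Zqua n x y z1 z2 z3 z4) = Zqua n (f x) (f y) (f z1) (f z2) (f z3) (f z4) := by
  simp only [Zqua, map_sum, apply_ite f, map_mul, map_pow, map_zero]

end Symmetries

section CornerRefinements

variable {K : Type*} [Field K] {x y z1 z2 z3 z4 : K}

theorem sixVertexZ_bottomRight (n : ℕ) (hx : x ≠ 0) (hy : y ≠ 0) :
    y * (z2 * z3) * sixVertexZ x y (edgeVec (n + 1) 1 z3) (edgeVec (n + 1) 1 z2) =
      y ^ ((n + 2) * (n + 2)) * ((y * z2 * z3 - (z2 - 1) * (z3 - 1)) * Zqua (n + 2) x y 1 z2 z3 1 +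
        (z2 - 1) * (z3 - 1) * Zun (n + 1) x y) := by
  obtain ⟨M1, M2, M3, c1, c2, c3, c4⟩ := exists_corner_chain n x y 1 z2 z3 1
  replace c1 := c1 _ rfl
  replace c2 := c2 _ rfl
  replace c3 := c3 _ rfl
  replace c4 := c4 _ rfl
  simp only [sub_self, mul_one, mul_zero, zero_mul, sub_zero, mul_eq_mul_left_iff, hy, or_false,
    sub_left_inj, mul_assoc x, hx] at c1 c2 c3 c4
  rw [c1, c2, c3, Zun]
  linear_combination c4

theorem sixVertexZ_topLeft (n : ℕ) (hx : x ≠ 0) (hy : y ≠ 0) :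
    y * (z1 * z4) * sixVertexZ x y (edgeVec (n + 1) z1 1) (edgeVec (n + 1) z4 1) =
      y ^ ((n + 2) * (n + 2)) * ((y * z1 * z4 - (z1 - 1) * (z4 - 1)) * Zqua (n + 2) x y z1 1 1 z4 +
        (z1 - 1) * (z4 - 1) * Zun (n + 1) x y) := by
  obtain ⟨M1, M2, M3, c1, c2, c3, c4⟩ := exists_corner_chain n x y z1 1 1 z4
  replace c1 := c1 _ rfl
  replace c2 := c2 _ rfl
  replace c3 := c3 _ rfl
  replace c4 := c4 _ rfl
  simp only [sub_self, mul_one, mul_zero, zero_mul, sub_zero, mul_eq_mul_left_iff, hy, or_false,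
    sub_left_inj, mul_assoc x, hx] at c1 c2 c3 c4
  rw [c2, c3, c4, sixVertexZ_one] at c1
  linear_combination c1

theorem sixVertexZ_bottomLeft (n : ℕ) (hx : x ≠ 0) (hy : y ≠ 0) (h3 : z3 ≠ 0) (h4 : z4 ≠ 0) :
    y * sixVertexZ x y (edgeVec (n + 1) 1 z3) (edgeVec (n + 1) z4 1) =
      y ^ ((n + 2) * (n + 2)) * ((y - x * (z3 - 1) * (z4 - 1)) * Zqua (n + 2) x y 1 1 z3 z4 +
        x * ((z3 - 1) * (z4 - 1)) * (x * z3 * z4) ^ (n + 1) * Zun (n + 1) x y) := by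
  obtain ⟨M1, M2, M3, c1, c2, c3, c4⟩ := exists_corner_chain n x y 1 1 z3 z4
  replace c1 := c1 _ rfl
  replace c2 := c2 _ rfl
  replace c3 := c3 _ rfl
  replace c4 := c4 _ rfl
  simp only [sub_self, mul_one, one_mul, mul_zero, zero_mul, sub_zero, mul_eq_mul_left_iff, hy,
    or_false, sub_left_inj, hx, mul_eq_zero, h3, h4] at c1 c2 c3 c4
  rw [c1, c2, Zun]
  rw [c4] at c3
  linear_combination c3

theorem sixVertexZ_topRight (n : ℕ) (hx : x ≠ 0) (hy : y ≠ 0) (h1 : z1 ≠ 0) (h2 : z2 ≠ 0) :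
    y * sixVertexZ x y (edgeVec (n + 1) z1 1) (edgeVec (n + 1) 1 z2) =
      y ^ ((n + 2) * (n + 2)) * ((y - x * (z1 - 1) * (z2 - 1)) * Zqua (n + 2) x y z1 z2 1 1 +
        x * ((z1 - 1) * (z2 - 1)) * (x * z1 * z2) ^ (n + 1) * Zun (n + 1) x y) := by
  obtain ⟨M1, M2, M3, c1, c2, c3, c4⟩ := exists_corner_chain n x y z1 z2 1 1
  replace c1 := c1 _ rfl
  replace c2 := c2 _ rfl
  replace c3 := c3 _ rfl
  replace c4 := c4 _ rfl
  simp only [sub_self, mul_one, one_mul, mul_zero, zero_mul, sub_zero, mul_eq_mul_left_iff, hy,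
    or_false, sub_left_inj, hx, mul_eq_zero, h1, h2] at c1 c2 c3 c4
  rw [c1]
  rw [c3, c4, sixVertexZ_one] at c2
  linear_combination c2

end CornerRefinements

section Relation

theorem Zqua_quadratic_of_ne {K : Type*} [Field K] (n : ℕ) {x y z1 z2 z3 z4 : K} (hx : x ≠ 0)
    (hy : y ≠ 0) (h1 : z1 ≠ 0) (h2 : z2 ≠ 0) (h3 : z3 ≠ 0) (h4 : z4 ≠ 0)
    (h14 : y * z1 * z4 - (z1 - 1) * (z4 - 1) ≠ 0) (h23 : y * z2 * z3 - (z2 - 1) * (z3 - 1) ≠ 0)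
    (h12 : y - x * (z1 - 1) * (z2 - 1) ≠ 0) (h34 : y - x * (z3 - 1) * (z4 - 1) ≠ 0) :
    y * (z4 - z2) * (z1 - z3) * Zqua (n + 3) x y z1 z2 z3 z4 * Zun (n + 1) x y =
      ((z1 - 1) * (z2 - 1) - y * z1 * z2) * ((z3 - 1) * (z4 - 1) - y * z3 * z4) *
          Zadj (n + 2) x y z4 z1 * Zadj (n + 2) x y z2 z3
      - (x * (z4 - 1) * (z1 - 1) - y) * (x * (z2 - 1) * (z3 - 1) - y) *
          z1 * z2 * z3 * z4 * Zbaradj (n + 2) x y z1 z2 * Zbaradj (n + 2) x y z3 z4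
      - (z2 - 1) * (z3 - 1) * ((z4 - 1) * (z1 - 1) - y * z4 * z1) *
          Zadj (n + 2) x y z4 z1 * Zun (n + 1) x y
      + (z3 - 1) * (z4 - 1) * (x * (z1 - 1) * (z2 - 1) - y) * z1 * z2 *
          (x * z3 * z4) ^ (n + 2) * Zbaradj (n + 2) x y z1 z2 * Zun (n + 1) x y
      - (z4 - 1) * (z1 - 1) * ((z2 - 1) * (z3 - 1) - y * z2 * z3) *
          Zadj (n + 2) x y z2 z3 * Zun (n + 1) x y
      + (z1 - 1) * (z2 - 1) * (x * (z3 - 1) * (z4 - 1) - y) * z3 * z4 *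
          (x * z1 * z2) ^ (n + 2) * Zbaradj (n + 2) x y z3 z4 * Zun (n + 1) x y
      + (z1 - 1) * (z2 - 1) * (z3 - 1) * (z4 - 1) *
          (1 - (x ^ 2 * z1 * z2 * z3 * z4) ^ (n + 2)) * (Zun (n + 1) x y) ^ 2 := by
  have quad := sixVertexZ_quadratic x y (edgeVec (n + 2) z1 z3) (edgeVec (n + 2) z4 z2)
  simp only [edgeVec_zero, edgeVec_last, edgeVec_succ, edgeVec_castSucc, sixVertexZ_one]
    at quad
  obtain ⟨M1, M2, M3, c1, c2, c3, c4⟩ := exists_corner_chain (n + 1) x y z1 z2 z3 z4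
  have hss := sixVertexZ_bottomRight (z2 := z2) (z3 := z3) n hx hy
  have hcc := sixVertexZ_topLeft (z1 := z1) (z4 := z4) n hx hy
  have hsc := sixVertexZ_bottomLeft n hx hy h3 h4
  have hcs := sixVertexZ_topRight n hx hy h1 h2
  have scale : ∀ (k : ℕ) (Z : K), ∃ Z', Z = y ^ k * Z' := fun k Z =>
    ⟨Z / y ^ k, (mul_div_cancel₀ Z (pow_ne_zero k hy)).symm⟩
  have cancel : ∀ (k : ℕ) {p q : K}, y ^ k * p = y ^ k * q → p = q := fun k _ _ =>
    mul_left_cancel₀ (pow_ne_zero k hy)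
  generalize sixVertexZ x y (edgeVec (n + 1) 1 z3) (edgeVec (n + 1) 1 z2) = Zss at *
  generalize sixVertexZ x y (edgeVec (n + 1) z1 1) (edgeVec (n + 1) z4 1) = Zcc at *
  generalize sixVertexZ x y (edgeVec (n + 1) 1 z3) (edgeVec (n + 1) z4 1) = Zsc at *
  generalize sixVertexZ x y (edgeVec (n + 1) z1 1) (edgeVec (n + 1) 1 z2) = Zcs at *
  generalize sixVertexZ x y (edgeVec (n + 2) z1 z3) (edgeVec (n + 2) z4 z2) = Z at *
  obtain ⟨Zss, rfl⟩ := scale ((n + 2) * (n + 2)) Zss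
  obtain ⟨Zcc, rfl⟩ := scale ((n + 2) * (n + 2)) Zcc
  obtain ⟨Zsc, rfl⟩ := scale ((n + 2) * (n + 2)) Zsc
  obtain ⟨Zcs, rfl⟩ := scale ((n + 2) * (n + 2)) Zcs
  obtain ⟨Z, rfl⟩ := scale ((n + 2) * (n + 2) + (2 * n + 3)) Z
  obtain ⟨M1, rfl⟩ := scale ((n + 2) * (n + 2) + (2 * n + 3)) M1
  obtain ⟨M2, rfl⟩ := scale ((n + 2) * (n + 2) + (2 * n + 3)) M2
  obtain ⟨M3, rfl⟩ := scale ((n + 2) * (n + 2) + (2 * n + 3)) M3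
  have hquad : y * ((z1 - z3) * (z4 - z2)) * Z * Zun (n + 1) x y =
      zeroWeight x y z1 z2 * zeroWeight x y z3 z4 * Zss * Zcc -
        zeroWeight x y z1 z4 * zeroWeight x y z2 z3 * Zsc * Zcs := by
    rw [show zeroWeight x y z3 z2 = zeroWeight x y z2 z3 by simp only [zeroWeight]; ring] at quad
    refine cancel (2 * ((n + 2) * (n + 2))) ?_
    linear_combination quad
  have key := refined_relation_of_chain (x := x) (y := y) (a := z1 * z4) (b := z2 * z3)
    (s := (x * z1 * z2) ^ (n + 1)) (t := (x * z3 * z4) ^ (n + 1))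
    (D := (z1 - z3) * (z4 - z2)) (a12 := y * z1 * z2 - (z1 - 1) * (z2 - 1))
    (a34 := y * z3 * z4 - (z3 - 1) * (z4 - 1)) (a14 := y * z1 * z4 - (z1 - 1) * (z4 - 1))
    (a23 := y * z2 * z3 - (z2 - 1) * (z3 - 1)) (b12 := y - x * (z1 - 1) * (z2 - 1))
    (b34 := y - x * (z3 - 1) * (z4 - 1)) (b14 := y - x * (z1 - 1) * (z4 - 1))
    (b23 := y - x * (z2 - 1) * (z3 - 1)) (f12 := (z1 - 1) * (z2 - 1))
    (f34 := (z3 - 1) * (z4 - 1)) (e14 := (z1 - 1) * (z4 - 1)) (e23 := (z2 - 1) * (z3 - 1))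
    (U := Zun (n + 1) x y) (Q := Zqua (n + 3) x y z1 z2 z3 z4) (Qss := Zqua (n + 2) x y 1 z2 z3 1)
    (Qcc := Zqua (n + 2) x y z1 1 1 z4) (Qsc := Zqua (n + 2) x y 1 1 z3 z4)
    (Qcs := Zqua (n + 2) x y z1 z2 1 1) (Zss := Zss) (Zcc := Zcc) (Zsc := Zsc) (Zcs := Zcs)
    (η0 := Z) (η1 := M1) (η2 := M2) (η3 := M3) (by ring) (by ring) (by ring)
    (cancel ((n + 2) * (n + 2)) (by linear_combination hss)) (cancel ((n + 2) * (n + 2)) (by linear_combination hcc))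
    (cancel ((n + 2) * (n + 2)) (by linear_combination hsc)) (cancel ((n + 2) * (n + 2)) (by linear_combination hcs))
    (cancel ((n + 2) * (n + 2) + (2 * n + 3)) (by linear_combination c1 _ rfl))
    (cancel ((n + 2) * (n + 2) + (2 * n + 3)) (by linear_combination c2 _ rfl))
    (cancel ((n + 2) * (n + 2) + (2 * n + 3)) (by linear_combination c3 _ rfl))
    (cancel ((n + 2) * (n + 2) + (2 * n + 3)) (mul_left_cancel₀ hx (by linear_combination c4 _ rfl))) hquad
  replace key := mul_left_cancel₀ (by simp [hy, h14, h23, h12, h34]) key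
  rw [Zadj, Zadj, Zbaradj, Zbaradj, Zqua_transpose _ _ _ z4, Zqua_rotate _ _ _ z3 z4,
    Zqua_transpose _ _ _ z2, Zqua_rotate _ _ _ z3 1]
  linear_combination key

end Relation

/-- Theorem (quadratic relation for the quadruply-refined ASM generating
function), stated for all values of the variables in any commutative ring,
equivalently as an identity of polynomials in `ℤ[x,y,z1,z2,z3,z4]`. -/
theorem stmt0 {R : Type*} [CommRing R] (x y z1 z2 z3 z4 : R) (n : ℕ) (hn : 3 ≤ n) :
    y * (z4 - z2) * (z1 - z3) * Zqua n x y z1 z2 z3 z4 * Zun (n - 2) x y =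
      ((z1 - 1) * (z2 - 1) - y * z1 * z2) * ((z3 - 1) * (z4 - 1) - y * z3 * z4) *
          Zadj (n - 1) x y z4 z1 * Zadj (n - 1) x y z2 z3
      - (x * (z4 - 1) * (z1 - 1) - y) * (x * (z2 - 1) * (z3 - 1) - y) *
          z1 * z2 * z3 * z4 * Zbaradj (n - 1) x y z1 z2 * Zbaradj (n - 1) x y z3 z4
      - (z2 - 1) * (z3 - 1) * ((z4 - 1) * (z1 - 1) - y * z4 * z1) *
          Zadj (n - 1) x y z4 z1 * Zun (n - 2) x y
      + (z3 - 1) * (z4 - 1) * (x * (z1 - 1) * (z2 - 1) - y) * z1 * z2 *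
          (x * z3 * z4) ^ (n - 1) * Zbaradj (n - 1) x y z1 z2 * Zun (n - 2) x y
      - (z4 - 1) * (z1 - 1) * ((z2 - 1) * (z3 - 1) - y * z2 * z3) *
          Zadj (n - 1) x y z2 z3 * Zun (n - 2) x y
      + (z1 - 1) * (z2 - 1) * (x * (z3 - 1) * (z4 - 1) - y) * z3 * z4 *
          (x * z1 * z2) ^ (n - 1) * Zbaradj (n - 1) x y z3 z4 * Zun (n - 2) x y
      + (z1 - 1) * (z2 - 1) * (z3 - 1) * (z4 - 1) *
          (1 - (x ^ 2 * z1 * z2 * z3 * z4) ^ (n - 1)) * (Zun (n - 2) x y) ^ 2 := by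
  obtain ⟨n, rfl⟩ := Nat.exists_eq_add_of_le' hn
  let P := MvPolynomial (Fin 6) ℤ
  let X : Fin 6 → P := MvPolynomial.X
  let ι : P →+* FractionRing P := algebraMap P (FractionRing P)
  have hι : Function.Injective ι := IsFractionRing.injective P (FractionRing P)
  have hne : ∀ p : P, MvPolynomial.eval (fun _ => (1 : ℤ)) p = 1 → ι p ≠ 0 := by
    intro p hp h
    rw [map_eq_zero_iff ι hι] at h
    simp [h] at hp
  have hX : ∀ i, ι (X i) ≠ 0 := fun i => hne _ (by simp [X])
  have h12 := hne (X 1 - X 0 * (X 2 - 1) * (X 3 - 1)) (by simp [X])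
  have h34 := hne (X 1 - X 0 * (X 4 - 1) * (X 5 - 1)) (by simp [X])
  have h14 := hne (X 1 * X 2 * X 5 - (X 2 - 1) * (X 5 - 1)) (by simp [X])
  have h23 := hne (X 1 * X 3 * X 4 - (X 3 - 1) * (X 4 - 1)) (by simp [X])
  simp only [map_sub, map_mul, map_one] at h12 h34 h14 h23
  have key := Zqua_quadratic_of_ne n (hX 0) (hX 1) (hX 2) (hX 3) (hX 4) (hX 5) h14 h23 h12 h34
  simp only [Zadj, Zbaradj, Zun, ← map_one ι, ← map_Zqua, ← map_sub, ← map_mul, ← map_add,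
    ← map_pow] at key
  have h := congrArg (MvPolynomial.eval₂Hom (Int.castRingHom R) ![x, y, z1, z2, z3, z4]) (hι key)
  simp only [map_sub, map_mul, map_add, map_pow, map_one, map_Zqua, X, MvPolynomial.coe_eval₂Hom,
    MvPolynomial.eval₂_X] at h
  exact h
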